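/- arXiv:1902.10642 — 2 statements merged into one kernel-verified Lean document; each statement's English description precedes it below -/
import Mathlib

section
/- Let M ⊆ ℝⁿ be a proper (i.e., closed in ℝⁿ) m-dimensional real-analytic submanifold. Let v₁, …, v_k : ℝⁿ → ℝⁿ be C^∞ maps, and for x ∈ M let γ_x : ℝ → ℝⁿ be the class-k curve γ_x(t) = x + t·v₁(x) + t²·v₂(x) + ⋯ + t^k·v_k(x). Assume that for every x ∈ M the curve γ_x has contact of order k(m+1) with M at t = 0. Then γ_x(t) ∈ M for every x ∈ M and every t ∈ ℝ. -/
/-- `M ⊆ ℝⁿ` is an `m`-dimensional real-analytic submanifold: around every point of `M`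
there is an open set `U` and a real-analytic map `f : U → ℝ^(n-m)` with surjective
derivative at every point of `U` such that `M ∩ U = {x ∈ U | f x = 0}`. -/
def IsAnalyticSubmanifold {n : ℕ} (m : ℕ) (M : Set (EuclideanSpace ℝ (Fin n))) : Prop :=
  ∀ p ∈ M, ∃ U : Set (EuclideanSpace ℝ (Fin n)), IsOpen U ∧ p ∈ U ∧
    ∃ f : EuclideanSpace ℝ (Fin n) → EuclideanSpace ℝ (Fin (n - m)),
      AnalyticOnNhd ℝ f U ∧ (∀ x ∈ U, Function.Surjective (fderiv ℝ f x)) ∧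
      M ∩ U = {x ∈ U | f x = 0}

/-- A curve `γ : ℝ → ℝⁿ` has contact of order `k` with `M ⊆ ℝⁿ` at `t = 0`: there is a
smooth curve `δ` with values in `M` whose derivatives at `0` up to order `k` agree with
those of `γ`. -/
def HasContactOrderAt {n : ℕ} (k : ℕ) (γ : ℝ → EuclideanSpace ℝ (Fin n))
    (M : Set (EuclideanSpace ℝ (Fin n))) : Prop :=
  ∃ δ : ℝ → EuclideanSpace ℝ (Fin n), ContDiff ℝ (⊤ : ℕ∞) δ ∧ (∀ t, δ t ∈ M) ∧
    ∀ j ≤ k, iteratedDeriv j γ 0 = iteratedDeriv j δ 0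

open Filter Topology Asymptotics
open scoped Polynomial ContDiff


/-- A curve whose composition with every linear functional is a polynomial of degree at most `d`. -/
def IsPolynomialCurve {V : Type*} [AddCommGroup V] [Module ℝ V] (d : ℕ) (g : ℝ → V) : Prop :=
  ∀ ℓ : V →ₗ[ℝ] ℝ, ∃ p : ℝ[X], p.natDegree ≤ d ∧ ∀ t, ℓ (g t) = p.eval t

namespace IsPolynomialCurve

variable {V V' : Type*} [AddCommGroup V] [Module ℝ V] [AddCommGroup V'] [Module ℝ V'] {d e : ℕ}

theorem mono {g : ℝ → V} (hg : IsPolynomialCurve d g) (h : d ≤ e) : IsPolynomialCurve e g := by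
  intro ℓ
  obtain ⟨p, hp, hpe⟩ := hg ℓ
  exact ⟨p, hp.trans h, hpe⟩

theorem scalar {g : ℝ → ℝ} (p : ℝ[X]) (hp : p.natDegree ≤ d) (hg : ∀ t, g t = p.eval t) :
    IsPolynomialCurve d g := by
  intro ℓ
  refine ⟨Polynomial.C (ℓ 1) * p, (Polynomial.natDegree_C_mul_le _ _).trans hp, fun t => ?_⟩
  have h : ℓ (g t) = g t * ℓ 1 := by
    rw [← smul_eq_mul, ← map_smul, smul_eq_mul, mul_one]
  rw [h, hg, Polynomial.eval_mul, Polynomial.eval_C, mul_comm]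

theorem exists_polynomial {g : ℝ → ℝ} (hg : IsPolynomialCurve d g) :
    ∃ p : ℝ[X], p.natDegree ≤ d ∧ ∀ t, g t = p.eval t :=
  hg LinearMap.id

theorem const (a : V) : IsPolynomialCurve d fun _ => a :=
  fun ℓ => ⟨Polynomial.C (ℓ a), by simp, by simp⟩

theorem pow (i : ℕ) : IsPolynomialCurve i fun t : ℝ => t ^ i :=
  scalar (Polynomial.X ^ i) (by simp) (by simp)

theorem map {g : ℝ → V} (hg : IsPolynomialCurve d g) (L : V →ₗ[ℝ] V') :
    IsPolynomialCurve d fun t => L (g t) :=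
  fun ℓ => hg (ℓ ∘ₗ L)

theorem add {g h : ℝ → V} (hg : IsPolynomialCurve d g) (hh : IsPolynomialCurve d h) :
    IsPolynomialCurve d fun t => g t + h t := by
  intro ℓ
  obtain ⟨p, hp, hpe⟩ := hg ℓ
  obtain ⟨q, hq, hqe⟩ := hh ℓ
  exact ⟨p + q, Polynomial.natDegree_add_le_of_degree_le hp hq, fun t => by simp [hpe, hqe]⟩

theorem sub {g h : ℝ → V} (hg : IsPolynomialCurve d g) (hh : IsPolynomialCurve d h) :
    IsPolynomialCurve d fun t => g t - h t := by
  simpa [sub_eq_add_neg] using hg.add (hh.map (-LinearMap.id))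

theorem sum {ι : Type*} (s : Finset ι) {g : ι → ℝ → V}
    (hg : ∀ i ∈ s, IsPolynomialCurve d (g i)) :
    IsPolynomialCurve d fun t => ∑ i ∈ s, g i t := by
  classical
  induction s using Finset.induction_on with
  | empty => simpa using const (d := d) (0 : V)
  | insert a s ha ih =>
    simp only [Finset.sum_insert ha]
    exact (hg a (Finset.mem_insert_self a s)).add
      (ih fun i hi => hg i (Finset.mem_insert_of_mem hi))

theorem smul {f : ℝ → ℝ} {g : ℝ → V} (hf : IsPolynomialCurve d f) (hg : IsPolynomialCurve e g) :
    IsPolynomialCurve (d + e) fun t => f t • g t := by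
  intro ℓ
  obtain ⟨p, hp, hpe⟩ := hf.exists_polynomial
  obtain ⟨q, hq, hqe⟩ := hg ℓ
  exact ⟨p * q, Polynomial.natDegree_mul_le_of_le hp hq, fun t => by simp [hpe, hqe]⟩

theorem prod {ι : Type*} (s : Finset ι) {g : ι → ℝ → ℝ} {d : ι → ℕ}
    (hg : ∀ i ∈ s, IsPolynomialCurve (d i) (g i)) :
    IsPolynomialCurve (∑ i ∈ s, d i) fun t => ∏ i ∈ s, g i t := by
  classical
  induction s using Finset.induction_on with
  | empty => simpa using const (d := 0) (1 : ℝ)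
  | insert a s ha ih =>
    simp only [Finset.sum_insert ha, Finset.prod_insert ha]
    exact (hg a (Finset.mem_insert_self a s)).smul
      (ih fun i hi => hg i (Finset.mem_insert_of_mem hi))

theorem det {ι : Type*} [Fintype ι] [DecidableEq ι] {A : ℝ → Matrix ι ι ℝ} {d : ι → ℕ}
    (hA : ∀ i j, IsPolynomialCurve (d j) fun t => A t i j) :
    IsPolynomialCurve (∑ j, d j) fun t => (A t).det := by
  simp only [Matrix.det_apply]
  refine sum _ fun σ _ => ?_
  have h := (prod Finset.univ fun j _ => hA (σ j) j).map
    (((Equiv.Perm.sign σ : ℤˣ) : ℤ) • (LinearMap.id : ℝ →ₗ[ℝ] ℝ))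
  simpa [Units.smul_def] using h

theorem continuous {g : ℝ → ℝ} (hg : IsPolynomialCurve d g) : Continuous g := by
  obtain ⟨p, -, hp⟩ := hg.exists_polynomial
  rw [funext hp]
  exact p.continuous

end IsPolynomialCurve

theorem Polynomial.eq_zero_of_isBigO_pow {N : ℕ} {p : ℝ[X]} (hp : p.natDegree < N)
    (h : (fun t => p.eval t) =O[𝓝[≠] 0] fun t : ℝ => t ^ N) : p = 0 := by
  induction N generalizing p with
  | zero => omega
  | succ N ih =>
    have h0 : p.eval 0 = 0 := by
      have h1 : Tendsto (fun t => p.eval t) (𝓝[≠] 0) (𝓝 0) := by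
        refine h.trans_tendsto (tendsto_nhdsWithin_of_tendsto_nhds ?_)
        have : Continuous fun t : ℝ => t ^ (N + 1) := by fun_prop
        simpa using this.tendsto 0
      exact tendsto_nhds_unique
        (tendsto_nhdsWithin_of_tendsto_nhds p.continuous.continuousAt) h1
    obtain ⟨q, rfl⟩ : Polynomial.X ∣ p := by
      rw [Polynomial.X_dvd_iff, Polynomial.coeff_zero_eq_eval_zero, h0]
    by_cases hq : q = 0
    · simp [hq]
    have hqd : (Polynomial.X * q).natDegree = q.natDegree + 1 := by
      rw [mul_comm, Polynomial.natDegree_mul_X hq]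
    rcases Nat.eq_zero_or_pos N with hN | hN
    · omega
    refine absurd (ih (p := q) (by omega) ?_) hq
    obtain ⟨C, hC⟩ := h.bound
    refine IsBigO.of_bound C ?_
    filter_upwards [hC, self_mem_nhdsWithin] with t ht ht0
    simp only [Polynomial.eval_mul, Polynomial.eval_X, norm_mul, pow_succ] at ht
    have : 0 < ‖t‖ := norm_pos_iff.2 ht0
    refine le_of_mul_le_mul_left ?_ this
    linarith

theorem IsPolynomialCurve.eq_zero_of_isBigO_pow {V : Type*} [NormedAddCommGroup V]
    [NormedSpace ℝ V] [FiniteDimensional ℝ V] {d N : ℕ} {g : ℝ → V} (hg : IsPolynomialCurve d g)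
    (hd : d < N) (h : g =O[𝓝 0] fun t : ℝ => t ^ N) (t : ℝ) : g t = 0 := by
  rw [← Module.forall_dual_apply_eq_zero_iff ℝ]
  intro ℓ
  obtain ⟨p, hp, hpe⟩ := hg ℓ
  have h1 : (fun t => p.eval t) =O[𝓝 0] fun t : ℝ => t ^ N := by
    refine IsBigO.trans ?_ h
    simp only [← hpe]
    exact (LinearMap.toContinuousLinearMap ℓ).isBigO_comp g _
  rw [hpe, Polynomial.eq_zero_of_isBigO_pow (hp.trans_lt hd) (h1.mono nhdsWithin_le_nhds),
    Polynomial.eval_zero]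

/-- By Cramer's rule, a polynomial curve `c` is a combination of the polynomial curves `W j`
as soon as they are annihilated, to high order at `0`, by linear maps `A t` which are uniformly
injective on the kernel of `P`. -/
theorem det_smul_eq_sum_cramer_smul {V G : Type*} [NormedAddCommGroup V] [NormedSpace ℝ V]
    [FiniteDimensional ℝ V] [NormedAddCommGroup G] [NormedSpace ℝ G] {m k : ℕ} (hk : 0 < k)
    (P : V →L[ℝ] (Fin m → ℝ)) (A : ℝ → V →L[ℝ] G) (W : Fin m → ℝ → V) (c : ℝ → V) (C : ℝ)
    (hW : ∀ j, IsPolynomialCurve k (W j)) (hc : IsPolynomialCurve (k - 1) c)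
    (hA : ∀ᶠ t in 𝓝 0, ∀ q, P q = 0 → ‖q‖ ≤ C * ‖A t q‖)
    (hAW : ∀ j, (fun t => A t (W j t)) =O[𝓝 0] fun t : ℝ => t ^ (k * (m + 1)))
    (hAc : (fun t => A t (c t)) =O[𝓝 0] fun t : ℝ => t ^ (k * (m + 1))) (t : ℝ) :
    (Matrix.of fun l j => P (W j t) l).det • c t =
      ∑ j, (Matrix.of fun l j => P (W j t) l).cramer (P (c t)) j • W j t := by
  set D : ℝ → Matrix (Fin m) (Fin m) ℝ := fun t => Matrix.of fun l j => P (W j t) l with hD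
  have hDpoly : ∀ l j, IsPolynomialCurve k fun t => D t l j := fun l j =>
    (hW j).map ((LinearMap.proj l : (Fin m → ℝ) →ₗ[ℝ] ℝ) ∘ₗ (P : V →ₗ[ℝ] (Fin m → ℝ)))
  have hdet : IsPolynomialCurve (k * m) fun t => (D t).det := by
    simpa [mul_comm] using IsPolynomialCurve.det (d := fun _ => k) hDpoly
  have hcr : ∀ j, IsPolynomialCurve (k * m - 1) fun t => (D t).cramer (P (c t)) j := by
    intro j
    simp only [Matrix.cramer_apply]
    refine (IsPolynomialCurve.det (d := Function.update (fun _ => k) j (k - 1)) ?_).mono ?_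
    · intro i l
      by_cases hl : l = j
      · subst hl
        simpa using hc.map
          ((LinearMap.proj i : (Fin m → ℝ) →ₗ[ℝ] ℝ) ∘ₗ (P : V →ₗ[ℝ] (Fin m → ℝ)))
      · simpa [hl] using hDpoly i l
    · rw [Finset.sum_update_of_mem (Finset.mem_univ j)]
      have hm : 0 < m := j.pos
      simp only [Finset.sum_const, smul_eq_mul, Finset.card_sdiff, Finset.card_univ,
        Fintype.card_fin, Finset.inter_univ, Finset.card_singleton]
      obtain ⟨m, rfl⟩ := Nat.exists_eq_succ_of_ne_zero hm.ne'
      rw [Nat.succ_sub_one, Nat.mul_succ, mul_comm m k]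
      omega
  set q : ℝ → V := fun t =>
    (D t).det • c t - ∑ j, (D t).cramer (P (c t)) j • W j t with hq
  suffices h : ∀ t, q t = 0 from sub_eq_zero.1 (h t)
  have hqpoly : IsPolynomialCurve (k * (m + 1) - 1) q := by
    refine ((hdet.smul hc).mono ?_).sub (IsPolynomialCurve.sum _ fun j _ =>
      ((hcr j).smul (hW j)).mono ?_)
    · rw [mul_add, mul_one]; omega
    · have : 0 < k * m := Nat.mul_pos hk j.pos
      rw [mul_add, mul_one]; omega
  refine hqpoly.eq_zero_of_isBigO_pow (N := k * (m + 1)) (Nat.sub_one_lt (by positivity)) ?_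
  have hPq : ∀ t, P (q t) = 0 := by
    intro t
    have h := Matrix.mulVec_cramer (D t) (P (c t))
    simp only [hq, map_sub, map_sum, map_smul, ← h, sub_eq_zero]
    ext l
    simp [Matrix.mulVec, dotProduct, hD, mul_comm]
  have hAq : (fun t => A t (q t)) =O[𝓝 0] fun t : ℝ => t ^ (k * (m + 1)) := by
    have hone : ∀ {g : ℝ → ℝ}, Continuous g → g =O[𝓝 0] fun _ => (1 : ℝ) := fun hg =>
      hg.continuousAt.isBigO_one ℝ
    simp only [hq, map_sub, map_sum, map_smul]
    refine IsBigO.sub ?_ (IsBigO.fun_sum fun j _ => ?_)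
    · simpa using (hone hdet.continuous).smul hAc
    · simpa using (hone (hcr j).continuous).smul (hAW j)
  refine IsBigO.trans (IsBigO.of_bound C ?_) hAq
  filter_upwards [hA] with t ht using ht _ (hPq t)

theorem isBigO_pow_succ_of_deriv {G : Type*} [NormedAddCommGroup G] [NormedSpace ℝ G] {N : ℕ}
    {h h' : ℝ → G} (hd : ∀ᶠ t in 𝓝 0, HasDerivAt h (h' t) t) (h0 : h 0 = 0)
    (hO : h' =O[𝓝 0] fun t : ℝ => t ^ N) : h =O[𝓝 0] fun t : ℝ => t ^ (N + 1) := by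
  obtain ⟨C, hC0, hC⟩ := hO.exists_pos
  obtain ⟨r, hr, hball⟩ := Metric.eventually_nhds_iff_ball.1 (hd.and hC.bound)
  refine IsBigO.of_bound C ?_
  filter_upwards [Metric.ball_mem_nhds (0 : ℝ) hr] with t ht
  have hsub : Metric.closedBall (0 : ℝ) ‖t‖ ⊆ Metric.ball 0 r :=
    Metric.closedBall_subset_ball (by simpa using ht)
  have hCn : ∀ s ∈ Metric.closedBall (0 : ℝ) ‖t‖, ‖h' s‖ ≤ C * ‖t‖ ^ N := by
    intro s hs
    refine (hball s (hsub hs)).2.trans ?_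
    rw [norm_pow]
    have : ‖s‖ ≤ ‖t‖ := by simpa using hs
    gcongr
  have key := (convex_closedBall (0 : ℝ) ‖t‖).norm_image_sub_le_of_norm_hasDerivWithin_le
    (f := h) (f' := h') (C := C * ‖t‖ ^ N)
    (fun s hs => (hball s (hsub hs)).1.hasDerivWithinAt) hCn
    (x := 0) (y := t) (by simp) (by simp)
  simpa [h0, pow_succ, mul_assoc] using key

theorem iteratedDeriv_comp_congr {E G : Type*} [NormedAddCommGroup E] [NormedSpace ℝ E]
    [NormedAddCommGroup G] [NormedSpace ℝ G] {f : E → G} {γ δ : ℝ → E} {t : ℝ} {N : ℕ}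
    (hf : ContDiffAt ℝ ∞ f (γ t)) (hγ : ContDiffAt ℝ ∞ γ t) (hδ : ContDiffAt ℝ ∞ δ t)
    (h : ∀ j ≤ N, iteratedDeriv j γ t = iteratedDeriv j δ t) {j : ℕ} (hj : j ≤ N) :
    iteratedDeriv j (fun s => f (γ s)) t = iteratedDeriv j (fun s => f (δ s)) t := by
  have h0 : γ t = δ t := by simpa using h 0 (Nat.zero_le N)
  have hi : ((j : ℕ∞) : WithTop ℕ∞) ≤ ∞ := by exact_mod_cast le_top
  have hfd : ∀ i ≤ N, iteratedFDeriv ℝ i γ t = iteratedFDeriv ℝ i δ t := by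
    intro i hi
    simp only [iteratedFDeriv_eq_equiv_comp, Function.comp_apply, h i hi]
  have hγ' := iteratedFDeriv_comp hf hγ (i := j) hi
  have hδ' := iteratedFDeriv_comp (h0 ▸ hf) hδ (i := j) hi
  rw [iteratedDeriv_eq_iteratedFDeriv, iteratedDeriv_eq_iteratedFDeriv]
  congr 1
  refine hγ'.trans (Eq.trans ?_ hδ'.symm)
  rw [h0]
  unfold FormalMultilinearSeries.taylorComp
  refine Finset.sum_congr rfl fun c _ => ?_
  unfold FormalMultilinearSeries.compAlongOrderedFinpartition
  congr 1
  funext i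
  exact hfd _ ((c.partSize_le i).trans hj)

section

variable {Z G : Type*} [NormedAddCommGroup Z] [NormedSpace ℝ Z]
  [NormedAddCommGroup G] [NormedSpace ℝ G]

theorem hasDerivAt_slice {F : Z × ℝ → G} {z : Z} {t : ℝ} (hF : DifferentiableAt ℝ F (z, t)) :
    HasDerivAt (fun s => F (z, s)) (fderiv ℝ F (z, t) (0, 1)) t :=
  hF.hasFDerivAt.comp_hasDerivAt t ((hasDerivAt_const t z).prodMk (hasDerivAt_id t))

omit [NormedSpace ℝ Z] in
theorem eventually_slice_mem {O : Set (Z × ℝ)} (hO : IsOpen O) {z : Z} (hz : (z, (0 : ℝ)) ∈ O) :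
    ∀ᶠ t in 𝓝 (0 : ℝ), (z, t) ∈ O :=
  (Continuous.prodMk_right z).continuousAt.eventually_mem (hO.mem_nhds hz)

theorem iteratedDeriv_partialDeriv_eq_zero {F : Z × ℝ → G} {O : Set (Z × ℝ)} (hO : IsOpen O)
    (hF : ContDiffOn ℝ ∞ F O) {z : Z} (hz : (z, (0 : ℝ)) ∈ O) {N : ℕ}
    (h : ∀ j < N + 1, iteratedDeriv j (fun t => F (z, t)) 0 = 0) :
    ∀ j < N, iteratedDeriv j (fun t => fderiv ℝ F (z, t) (0, 1)) 0 = 0 := by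
  intro j hj
  rw [← h (j + 1) (by omega), iteratedDeriv_succ']
  refine Filter.EventuallyEq.iteratedDeriv_eq j ?_
  filter_upwards [eventually_slice_mem hO hz] with t ht
  exact ((hasDerivAt_slice
    ((hF.contDiffAt (hO.mem_nhds ht)).differentiableAt (by simp))).deriv).symm

theorem contDiffOn_fderiv_apply {F : Z × ℝ → G} {O : Set (Z × ℝ)} (hO : IsOpen O)
    (hF : ContDiffOn ℝ ∞ F O) (w : Z × ℝ) : ContDiffOn ℝ ∞ (fun p => fderiv ℝ F p w) O :=
  (hF.fderiv_of_isOpen hO (by simp)).clm_apply contDiffOn_const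

theorem isBigO_pow_of_iteratedDeriv_eq_zero {F : Z × ℝ → G} {O : Set (Z × ℝ)} (hO : IsOpen O)
    (hF : ContDiffOn ℝ ∞ F O) {z : Z} (hz : (z, (0 : ℝ)) ∈ O) {N : ℕ}
    (h : ∀ j < N, iteratedDeriv j (fun t => F (z, t)) 0 = 0) :
    (fun t => F (z, t)) =O[𝓝 0] fun t : ℝ => t ^ N := by
  induction N generalizing F with
  | zero =>
    have hc : ContinuousAt (fun t => F (z, t)) 0 :=
      ContinuousAt.comp (f := fun t : ℝ => (z, t))
        (hF.contDiffAt (hO.mem_nhds hz)).continuousAt (Continuous.prodMk_right z).continuousAt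
    simpa using hc.isBigO_one ℝ
  | succ N ih =>
    refine isBigO_pow_succ_of_deriv (h' := fun t => fderiv ℝ F (z, t) (0, 1)) ?_
      (by simpa using h 0 (by omega))
      (ih (contDiffOn_fderiv_apply hO hF _) (iteratedDeriv_partialDeriv_eq_zero hO hF hz h))
    filter_upwards [eventually_slice_mem hO hz] with t ht
    exact hasDerivAt_slice ((hF.contDiffAt (hO.mem_nhds ht)).differentiableAt (by simp))

/-- If `F (z, ·)` vanishes to order `N` at `0` for all `z`, so do its derivatives in `z`. -/
theorem isBigO_pow_fderiv_of_iteratedDeriv_eq_zero {F : Z × ℝ → G} {O : Set (Z × ℝ)}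
    (hO : IsOpen O) (hF : ContDiffOn ℝ ∞ F O) {N : ℕ}
    (h : ∀ z, (z, (0 : ℝ)) ∈ O → ∀ j < N, iteratedDeriv j (fun t => F (z, t)) 0 = 0)
    {z : Z} (hz : (z, (0 : ℝ)) ∈ O) (w : Z) :
    (fun t => fderiv ℝ F (z, t) (w, 0)) =O[𝓝 0] fun t : ℝ => t ^ N := by
  induction N generalizing F with
  | zero =>
    exact isBigO_pow_of_iteratedDeriv_eq_zero (F := fun p => fderiv ℝ F p (w, 0)) hO
      (contDiffOn_fderiv_apply hO hF _) hz (by simp)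
  | succ N ih =>
    have hda : ∀ p ∈ O, DifferentiableAt ℝ (fderiv ℝ F) p := fun p hp =>
      ((hF.fderiv_of_isOpen hO (m := ∞) (by simp)).contDiffAt (hO.mem_nhds hp)).differentiableAt
        (by simp)
    refine isBigO_pow_succ_of_deriv
      (h' := fun t => fderiv ℝ (fun p => fderiv ℝ F p (0, 1)) (z, t) (w, 0)) ?_ ?_
      (ih (contDiffOn_fderiv_apply hO hF _)
        (fun z hz => iteratedDeriv_partialDeriv_eq_zero hO hF hz (h z hz)))
    · filter_upwards [eventually_slice_mem hO hz] with t ht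
      have hsymm : IsSymmSndFDerivAt ℝ F (z, t) :=
        (hF.contDiffAt (hO.mem_nhds ht)).isSymmSndFDerivAt
          (by
            rw [minSmoothness_of_isRCLikeNormedField]
            exact WithTop.coe_le_coe.2 le_top)
      have h1 := hasDerivAt_slice (F := fun p => fderiv ℝ F p (w, 0))
        ((hda _ ht).clm_apply (differentiableAt_const _))
      convert h1 using 1
      rw [fderiv_clm_apply (hda _ ht) (differentiableAt_const _),
        fderiv_clm_apply (hda _ ht) (differentiableAt_const _)]
      simpa using hsymm.eq (w, 0) (0, 1)
    · have hinc : HasFDerivAt (fun y : Z => (y, (0 : ℝ)))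
          ((ContinuousLinearMap.id ℝ Z).prod 0) z :=
        (hasFDerivAt_id z).prodMk (hasFDerivAt_const 0 z)
      have h1 : HasFDerivAt (fun y : Z => F (y, 0))
          ((fderiv ℝ F (z, 0)).comp ((ContinuousLinearMap.id ℝ Z).prod 0)) z :=
        HasFDerivAt.comp z (f := fun y : Z => (y, (0 : ℝ)))
          ((hF.contDiffAt (hO.mem_nhds hz)).differentiableAt (by simp)).hasFDerivAt hinc
      have h2 : (fun y : Z => F (y, 0)) =ᶠ[𝓝 z] fun _ => 0 := by
        filter_upwards [hinc.continuousAt.eventually_mem (hO.mem_nhds hz)] with y hy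
        simpa using h y hy 0 (by omega)
      have h3 := h1.unique ((hasFDerivAt_const (0 : G) z).congr_of_eventuallyEq h2)
      simpa using DFunLike.congr_fun h3 w

end

/-- Near a point of a level set of a submersion `f`, the level set is locally parametrized by a
right inverse `φ` of a linear projection `P`, and `f'` is uniformly injective on `ker P`. -/
theorem exists_levelSet_parametrization {n m : ℕ} (hmn : m ≤ n)
    {f : EuclideanSpace ℝ (Fin n) → EuclideanSpace ℝ (Fin (n - m))}
    {U : Set (EuclideanSpace ℝ (Fin n))} (hU : IsOpen U) (hf : AnalyticOnNhd ℝ f U)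
    {p : EuclideanSpace ℝ (Fin n)} (hp : p ∈ U) (hsurj : Function.Surjective (fderiv ℝ f p))
    (hfp : f p = 0) :
    ∃ (P : EuclideanSpace ℝ (Fin n) →L[ℝ] (Fin m → ℝ))
      (φ : (Fin m → ℝ) → EuclideanSpace ℝ (Fin n)) (S : Set (Fin m → ℝ))
      (V : Set (EuclideanSpace ℝ (Fin n))) (C : ℝ), IsOpen S ∧ P p ∈ S ∧ IsOpen V ∧ V ⊆ U ∧
        ContDiffOn ℝ ∞ φ S ∧ φ (P p) = p ∧ (∀ z ∈ S, φ z ∈ V ∧ f (φ z) = 0 ∧ P (φ z) = z) ∧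
        ∀ x ∈ V, ∀ q, P q = 0 → ‖q‖ ≤ C * ‖fderiv ℝ f x q‖ := by
  set K := (fderiv ℝ f p).toLinearMap.ker with hK
  have hKm : Module.finrank ℝ K = m := by
    have h1 := (fderiv ℝ f p).toLinearMap.finrank_range_add_finrank_ker
    rw [LinearMap.range_eq_top.2 hsurj, finrank_top, finrank_euclideanSpace_fin,
      finrank_euclideanSpace_fin, ← hK] at h1
    omega
  obtain ⟨g, hg⟩ := K.subtype.exists_leftInverse_of_injective (by simp)
  let ε : K ≃ₗ[ℝ] (Fin m → ℝ) := LinearEquiv.ofFinrankEq _ _ (by simp [hKm])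
  let P : EuclideanSpace ℝ (Fin n) →L[ℝ] (Fin m → ℝ) :=
    LinearMap.toContinuousLinearMap (ε.toLinearMap ∘ₗ g)
  have hP : ∀ q, fderiv ℝ f p q = 0 → P q = 0 → q = 0 := by
    intro q h1 h2
    have h3 : g q = ⟨q, h1⟩ := DFunLike.congr_fun hg ⟨q, h1⟩
    have h4 : g q = 0 := ε.injective (by simpa [P] using h2)
    simpa using congrArg Subtype.val (h3.symm.trans h4)
  let L : EuclideanSpace ℝ (Fin n) ≃L[ℝ] EuclideanSpace ℝ (Fin (n - m)) × (Fin m → ℝ) :=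
    (LinearEquiv.ofInjectiveOfFinrankEq ((fderiv ℝ f p).prod P).toLinearMap
      ((injective_iff_map_eq_zero _).2 fun q hq =>
        hP q (congrArg Prod.fst hq) (congrArg Prod.snd hq))
      (by simp; omega)).toContinuousLinearEquiv
  have hL : (L : EuclideanSpace ℝ (Fin n) →L[ℝ] _) = (fderiv ℝ f p).prod P := by
    ext1 q; rfl
  have hfa : ∀ x ∈ U, ContDiffAt ℝ ω f x := fun x hx => (hf x hx).contDiffAt
  have hΨ' : HasFDerivAt (fun x => (f x, P x))
      (L : EuclideanSpace ℝ (Fin n) →L[ℝ] EuclideanSpace ℝ (Fin (n - m)) × (Fin m → ℝ)) p := by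
    rw [hL]
    exact ((hfa p hp).differentiableAt (by simp)).hasFDerivAt.prodMk P.hasFDerivAt
  have hΨ : ContDiffAt ℝ ω (fun x => (f x, P x)) p := (hfa p hp).prodMk P.contDiff.contDiffAt
  let e := hΨ.toOpenPartialHomeomorph _ hΨ' (by simp)
  have he : ∀ x, e x = (f x, P x) := fun x => rfl
  have hep : e p = (0, P p) := by rw [he, hfp]
  have hps : p ∈ e.source := hΨ.mem_toOpenPartialHomeomorph_source hΨ' (by simp)
  have hpt : ((0 : EuclideanSpace ℝ (Fin (n - m))), P p) ∈ e.target := hep ▸ e.map_source hps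
  have hsymm : e.symm (0, P p) = p := by rw [← hep, e.left_inv hps]
  have hcd : ContDiffAt ℝ ω e.symm (0, P p) :=
    e.contDiffAt_symm hpt (by rw [hsymm]; exact hΨ') (by rw [hsymm]; exact hΨ)
  set c := ‖(L.symm :
    EuclideanSpace ℝ (Fin (n - m)) × (Fin m → ℝ) →L[ℝ] EuclideanSpace ℝ (Fin n))‖ with hc
  set V := U ∩ {x | c * ‖fderiv ℝ f x - fderiv ℝ f p‖ < 1 / 2} with hV
  have hVo : IsOpen V := by
    refine ContinuousOn.isOpen_inter_preimage
      (f := fun x => c * ‖fderiv ℝ f x - fderiv ℝ f p‖) ?_ hU isOpen_Iio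
    have : ContinuousOn (fderiv ℝ f) U := hf.fderiv.continuousOn
    fun_prop
  have hpV : p ∈ V := ⟨hp, by simp⟩
  have hev : ∀ᶠ z in 𝓝 (P p), ContDiffAt ℝ ω (fun z => e.symm (0, z)) z ∧
      e.symm (0, z) ∈ V ∧ ((0 : EuclideanSpace ℝ (Fin (n - m))), z) ∈ e.target := by
    have hi : ContinuousAt (fun z => ((0 : EuclideanSpace ℝ (Fin (n - m))), z)) (P p) :=
      (Continuous.prodMk_right _).continuousAt
    refine (hi.eventually (hcd.eventually (by simp))).mp ?_
    filter_upwards [(ContinuousAt.comp (f := fun z => (0, z)) hcd.continuousAt hi).eventually_mem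
      (hVo.mem_nhds (by simpa [hsymm] using hpV)),
      hi.eventually_mem (e.open_target.mem_nhds hpt)] with z h2 h3 h1
    exact ⟨ContDiffAt.comp z (f := fun z => (0, z)) h1 (contDiffAt_const.prodMk contDiffAt_id),
      h2, h3⟩
  obtain ⟨S, hS, hSo, hpS⟩ := eventually_nhds_iff.1 hev
  refine ⟨P, fun z => e.symm (0, z), S, V, 2 * c, hSo, hpS, hVo, Set.inter_subset_left,
    fun z hz => ((hS z hz).1.of_le le_top).contDiffWithinAt, hsymm, fun z hz => ?_, ?_⟩
  · have h1 := (he (e.symm (0, z))).symm.trans (e.right_inv (hS z hz).2.2)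
    exact ⟨(hS z hz).2.1, congrArg Prod.fst h1, congrArg Prod.snd h1⟩
  · intro x hx q hq
    have h1 : ‖q‖ ≤ c * ‖fderiv ℝ f p q‖ := by
      have h := (L.symm :
    EuclideanSpace ℝ (Fin (n - m)) × (Fin m → ℝ) →L[ℝ] EuclideanSpace ℝ (Fin n)).le_opNorm (L q)
      have hLq : L q = (fderiv ℝ f p q, 0) := by
        rw [← hq]; rfl
      have hn : ‖L q‖ = ‖fderiv ℝ f p q‖ := by rw [hLq, Prod.norm_mk]; simp
      rw [hn] at h
      simpa using h
    have h2 : ‖fderiv ℝ f p q‖ ≤ ‖fderiv ℝ f x q‖ + ‖fderiv ℝ f x - fderiv ℝ f p‖ * ‖q‖ := by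
      have h3 := (fderiv ℝ f x - fderiv ℝ f p).le_opNorm q
      have h4 := norm_sub_le (fderiv ℝ f x q) ((fderiv ℝ f x - fderiv ℝ f p) q)
      simp only [sub_apply, sub_sub_cancel] at h3 h4
      linarith
    have h5 : c * ‖fderiv ℝ f x - fderiv ℝ f p‖ ≤ 1 / 2 := hx.2.le
    have h6 := mul_le_mul_of_nonneg_left h2 (norm_nonneg _ : 0 ≤ c)
    have h7 := mul_le_mul_of_nonneg_right h5 (norm_nonneg q)
    nlinarith

theorem sum_smul_add_eq_zero_of_cramer {V : Type*} [AddCommGroup V] [Module ℝ V] {m : ℕ}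
    (P : V →ₗ[ℝ] (Fin m → ℝ)) (W : Fin m → V) (c : V) (ζ : Fin m → ℝ)
    (hrel : (Matrix.of fun l j => P (W j) l).det • c =
      ∑ j, (Matrix.of fun l j => P (W j) l).cramer (P c) j • W j)
    (hdet : (Matrix.of fun l j => P (W j) l).det ≠ 0) (hP : P (∑ j, ζ j • W j + c) = 0) :
    ∑ j, ζ j • W j + c = 0 := by
  set D : Matrix (Fin m) (Fin m) ℝ := Matrix.of fun l j => P (W j) l with hD
  have hPc : P c = -D.mulVec ζ := by
    rw [map_add, add_comm, add_eq_zero_iff_eq_neg] at hP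
    rw [hP]
    ext l
    simp [Matrix.mulVec, dotProduct, hD, mul_comm]
  have hcr : D.cramer (P c) = -(D.det • ζ) := by
    rw [hPc, map_neg, Matrix.cramer_eq_adjugate_mulVec, Matrix.mulVec_mulVec,
      Matrix.adjugate_mul, Matrix.smul_mulVec, Matrix.one_mulVec]
  refine (smul_eq_zero.1 ?_).resolve_left hdet
  rw [smul_add, hrel, hcr, Finset.smul_sum, ← Finset.sum_add_distrib]
  exact Finset.sum_eq_zero fun j _ => by simp [smul_smul]

/-- If the velocity of each curve `Γ (z, ·)` is a combination of the derivatives of `Γ` in `z`,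
then each curve stays, for a short time, in the image of `Γ (·, 0)`. -/
theorem eventually_exists_eq_of_cramer {V : Type*} [NormedAddCommGroup V] [NormedSpace ℝ V]
    {m : ℕ} {S : Set (Fin m → ℝ)} (hS : IsOpen S) {z₀ : Fin m → ℝ} (hz₀ : z₀ ∈ S)
    {Γ : (Fin m → ℝ) × ℝ → V} (hΓ : ContDiffOn ℝ ∞ Γ (S ×ˢ Set.univ))
    (P : V →L[ℝ] (Fin m → ℝ)) (hP : ∀ z ∈ S, P (Γ (z, 0)) = z)
    (hrel : ∀ p ∈ S ×ˢ Set.univ,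
      (Matrix.of fun l j => P (fderiv ℝ Γ p (Pi.single j 1, 0)) l).det • fderiv ℝ Γ p (0, 1) =
        ∑ j, (Matrix.of fun l j => P (fderiv ℝ Γ p (Pi.single j 1, 0)) l).cramer
          (P (fderiv ℝ Γ p (0, 1))) j • fderiv ℝ Γ p (Pi.single j 1, 0)) :
    ∀ᶠ t in 𝓝 (0 : ℝ), ∃ z ∈ S, Γ (z₀, t) = Γ (z, 0) := by
  have hO : IsOpen (S ×ˢ (Set.univ : Set ℝ)) := hS.prod isOpen_univ
  have h0 : (z₀, (0 : ℝ)) ∈ S ×ˢ (Set.univ : Set ℝ) := ⟨hz₀, trivial⟩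
  have hdiff : ∀ p ∈ S ×ˢ (Set.univ : Set ℝ), HasFDerivAt Γ (fderiv ℝ Γ p) p := fun p hp =>
    ((hΓ.contDiffAt (hO.mem_nhds hp)).differentiableAt (by simp)).hasFDerivAt
  have hPW : ∀ w, P (fderiv ℝ Γ (z₀, 0) (w, 0)) = w := by
    intro w
    have h1 : HasFDerivAt (fun y : Fin m → ℝ => P (Γ (y, 0)))
        (P.comp ((fderiv ℝ Γ (z₀, 0)).comp ((ContinuousLinearMap.id ℝ (Fin m → ℝ)).prod 0))) z₀ :=
      P.hasFDerivAt.comp z₀ (HasFDerivAt.comp z₀ (f := fun y : Fin m → ℝ => (y, (0 : ℝ)))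
        (hdiff _ h0) ((hasFDerivAt_id z₀).prodMk (hasFDerivAt_const 0 z₀)))
    have h2 : (fun y : Fin m → ℝ => P (Γ (y, 0))) =ᶠ[𝓝 z₀] id := by
      filter_upwards [hS.mem_nhds hz₀] with y hy using hP y hy
    simpa using DFunLike.congr_fun (h1.unique ((hasFDerivAt_id z₀).congr_of_eventuallyEq h2)) w
  let L₀ := (P.comp (fderiv ℝ Γ (z₀, 0))).prod (ContinuousLinearMap.snd ℝ (Fin m → ℝ) ℝ)
  let L : ((Fin m → ℝ) × ℝ) ≃L[ℝ] (Fin m → ℝ) × ℝ :=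
    (LinearEquiv.ofInjectiveEndo L₀.toLinearMap ((injective_iff_map_eq_zero _).2 (by
      rintro ⟨w, s⟩ hq
      have h2 : s = 0 := congrArg Prod.snd hq
      subst h2
      have h1 : P (fderiv ℝ Γ (z₀, 0) (w, 0)) = 0 := congrArg Prod.fst hq
      rw [hPW] at h1
      rw [h1]; rfl))).toContinuousLinearEquiv
  have hΘ' : HasFDerivAt (fun p : (Fin m → ℝ) × ℝ => (P (Γ p), p.2))
      (L : (Fin m → ℝ) × ℝ →L[ℝ] (Fin m → ℝ) × ℝ) (z₀, 0) := by
    have hL : (L : (Fin m → ℝ) × ℝ →L[ℝ] (Fin m → ℝ) × ℝ) = L₀ :=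
      ContinuousLinearMap.ext fun _ => rfl
    rw [hL]
    exact (P.hasFDerivAt.comp _ (hdiff _ h0)).prodMk hasFDerivAt_snd
  have hΘ : ContDiffAt ℝ 1 (fun p : (Fin m → ℝ) × ℝ => (P (Γ p), p.2)) (z₀, 0) :=
    (P.contDiff.contDiffAt.comp _ ((hΓ.contDiffAt (hO.mem_nhds h0)).of_le
      (by exact_mod_cast le_top))).prodMk contDiffAt_snd
  let e := hΘ.toOpenPartialHomeomorph _ hΘ' (by simp)
  have he : ∀ x, e x = (P (Γ x), x.2) := fun x => rfl
  have hez : e (z₀, 0) = (z₀, 0) := by rw [he, hP z₀ hz₀]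
  have hzs : (z₀, 0) ∈ e.source := hΘ.mem_toOpenPartialHomeomorph_source hΘ' (by simp)
  have hzt : (z₀, 0) ∈ e.target := by simpa only [hez] using e.map_source hzs
  have hsymm : e.symm (z₀, 0) = (z₀, 0) := by
    have := e.left_inv hzs
    rwa [hez] at this
  have hcd : ContDiffAt ℝ 1 e.symm (z₀, 0) :=
    e.contDiffAt_symm hzt (by rw [hsymm]; exact hΘ') (by rw [hsymm]; exact hΘ)
  let D : (Fin m → ℝ) × ℝ → Matrix (Fin m) (Fin m) ℝ := fun p =>
    Matrix.of fun l j => P (fderiv ℝ Γ p (Pi.single j 1, 0)) l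
  have hDc : ContinuousAt (fun p => (D p).det) (z₀, 0) := by
    have h1 : ContinuousAt (fderiv ℝ Γ) (z₀, 0) :=
      ((hΓ.fderiv_of_isOpen hO (m := ∞) (by simp)).contDiffAt (hO.mem_nhds h0)).continuousAt
    have h2 : ContinuousAt D (z₀, 0) := by
      refine continuousAt_pi.2 fun l => continuousAt_pi.2 fun j => ?_
      have h3 : ContinuousAt (fun p => P (fderiv ℝ Γ p (Pi.single j 1, 0))) (z₀, 0) := by
        fun_prop
      exact continuousAt_pi.1 h3 l
    exact (Continuous.matrix_det continuous_id).continuousAt.comp h2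
  have hD0 : (D (z₀, 0)).det ≠ 0 := by
    have : D (z₀, 0) = 1 := by
      ext l j
      simp [D, hPW, Matrix.one_apply, Pi.single_apply]
    simp [this]
  have hev : ∀ᶠ y in 𝓝 (z₀, (0 : ℝ)), y ∈ e.target ∧ DifferentiableAt ℝ e.symm y ∧
      e.symm y ∈ S ×ˢ (Set.univ : Set ℝ) ∧ (D (e.symm y)).det ≠ 0 := by
    filter_upwards [e.open_target.mem_nhds hzt, hcd.eventually (by simp),
      hcd.continuousAt.eventually_mem (hO.mem_nhds (by rwa [hsymm])),
      hcd.continuousAt.eventually (by rw [hsymm]; exact hDc.eventually_ne hD0)]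
      with y h1 h2 h3 h4
    exact ⟨h1, h2.differentiableAt (by simp), h3, h4⟩
  obtain ⟨r, hr, hball⟩ := Metric.eventually_nhds_iff_ball.1 hev
  have hconst : ∀ w ∈ Metric.ball z₀ r, ∀ t ∈ Metric.ball (0 : ℝ) r,
      Γ (e.symm (w, t)) = Γ (e.symm (w, 0)) := by
    intro w hw t ht
    have hB : ∀ s ∈ Metric.ball (0 : ℝ) r, (w, s) ∈ Metric.ball (z₀, (0 : ℝ)) r := by
      intro s hs
      rw [← ball_prod_same]
      exact ⟨hw, hs⟩
    have hder : ∀ s ∈ Metric.ball (0 : ℝ) r, HasDerivAt (fun s => Γ (e.symm (w, s))) 0 s := by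
      intro s hs
      obtain ⟨-, h2, h3, h4⟩ := hball _ (hB s hs)
      have hσ : HasDerivAt (fun s => e.symm (w, s)) (fderiv ℝ e.symm (w, s) (0, 1)) s :=
        h2.hasFDerivAt.comp_hasDerivAt s ((hasDerivAt_const s w).prodMk (hasDerivAt_id s))
      generalize fderiv ℝ e.symm (w, s) (0, 1) = σ' at hσ
      have hκ : HasDerivAt (fun s => Γ (e.symm (w, s))) (fderiv ℝ Γ (e.symm (w, s)) σ') s :=
        (hdiff _ h3).comp_hasDerivAt s hσ
      have hinv : (fun s => (P (Γ (e.symm (w, s))), (e.symm (w, s)).2)) =ᶠ[𝓝 s]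
          fun s => (w, s) := by
        filter_upwards [Metric.isOpen_ball.mem_nhds hs] with s hs
        exact (he _).symm.trans (e.right_inv (hball _ (hB s hs)).1)
      have hu := ((P.hasFDerivAt.comp_hasDerivAt s hκ).prodMk
        (hasFDerivAt_snd.comp_hasDerivAt s hσ)).unique
          (((hasDerivAt_const s w).prodMk (hasDerivAt_id s)).congr_of_eventuallyEq hinv)
      have hu1 : P (fderiv ℝ Γ (e.symm (w, s)) σ') = 0 := congrArg Prod.fst hu
      have hu2 : σ'.2 = 1 := congrArg Prod.snd hu
      have hdec : fderiv ℝ Γ (e.symm (w, s)) σ' =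
          ∑ j, σ'.1 j • fderiv ℝ Γ (e.symm (w, s)) (Pi.single j 1, 0) +
            fderiv ℝ Γ (e.symm (w, s)) (0, 1) := by
        simp only [← map_smul, ← map_sum, ← map_add]
        congr 1
        refine Prod.ext ?_ (by simp [hu2, Prod.snd_sum])
        ext j
        simp [Prod.fst_sum, Finset.sum_apply, Pi.single_apply]
      rw [hdec] at hκ hu1
      rwa [sum_smul_add_eq_zero_of_cramer P.toLinearMap _ _ σ'.1 (hrel _ h3) h4 hu1] at hκ
    exact Metric.isOpen_ball.is_const_of_deriv_eq_zero (convex_ball (0 : ℝ) r).isPreconnected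
      (fun s hs => (hder s hs).differentiableAt.differentiableWithinAt)
      (fun s hs => (hder s hs).deriv) ht (Metric.mem_ball_self hr)
  have hslice : ContinuousAt (fun t : ℝ => (z₀, t)) 0 :=
    (Continuous.prodMk_right z₀).continuousAt
  filter_upwards [hslice.eventually_mem (e.open_source.mem_nhds hzs),
    hslice.eventually ((e.continuousAt hzs).eventually_mem
      (by rw [hez]; exact Metric.ball_mem_nhds _ hr))] with t ht1 ht2
  rw [he, ← ball_prod_same] at ht2
  have h1 := hconst _ ht2.1 t ht2.2
  have h2 : e.symm (P (Γ (z₀, t)), t) = (z₀, t) := e.left_inv ht1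
  obtain ⟨h3, -, h5, -⟩ := hball (P (Γ (z₀, t)), 0)
    (by rw [← ball_prod_same]; exact ⟨ht2.1, Metric.mem_ball_self hr⟩)
  have h6 : (e.symm (P (Γ (z₀, t)), 0)).2 = 0 :=
    congrArg Prod.snd ((he _).symm.trans (e.right_inv h3))
  refine ⟨(e.symm (P (Γ (z₀, t)), 0)).1, h5.1, ?_⟩
  calc Γ (z₀, t) = Γ (e.symm (P (Γ (z₀, t)), t)) := by rw [h2]
    _ = Γ (e.symm (P (Γ (z₀, t)), 0)) := h1
    _ = Γ ((e.symm (P (Γ (z₀, t)), 0)).1, 0) := congrArg Γ (Prod.ext rfl h6)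

section

variable {Z V : Type*} [NormedAddCommGroup Z] [NormedSpace ℝ Z]
  [NormedAddCommGroup V] [NormedSpace ℝ V] {k : ℕ}

theorem fderiv_polynomialFamily {φ : Z → V} {u : Fin k → Z → V} {z : Z}
    (hφ : DifferentiableAt ℝ φ z) (hu : ∀ i, DifferentiableAt ℝ (u i) z) (t : ℝ) (w : Z) (s : ℝ) :
    fderiv ℝ (fun p : Z × ℝ => φ p.1 + ∑ i : Fin k, p.2 ^ ((i : ℕ) + 1) • u i p.1) (z, t) (w, s) =
      fderiv ℝ φ z w + ∑ i : Fin k, (t ^ ((i : ℕ) + 1) • fderiv ℝ (u i) z w +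
        t ^ (i : ℕ) • (s * ((i : ℕ) + 1)) • u i z) := by
  have h1 : HasFDerivAt (fun p : Z × ℝ => φ p.1) _ (z, t) :=
    hφ.hasFDerivAt.comp (z, t) hasFDerivAt_fst
  have h2 : ∀ i, HasFDerivAt (fun p : Z × ℝ => u i p.1) _ (z, t) := fun i =>
    (hu i).hasFDerivAt.comp (z, t) hasFDerivAt_fst
  have h3 : ∀ i : ℕ, HasFDerivAt (fun p : Z × ℝ => p.2 ^ (i + 1)) _ (z, t) := fun i =>
    (hasFDerivAt_snd (𝕜 := ℝ) (p := (z, t))).pow (i + 1)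
  have h4 := h1.fun_add
    (HasFDerivAt.fun_sum fun (i : Fin k) (_ : i ∈ Finset.univ) => (h3 i).fun_smul (h2 i))
  rw [h4.fderiv]
  simp [smul_smul]
  refine Finset.sum_congr rfl fun i _ => ?_
  congr 2
  ring

theorem isPolynomialCurve_fderiv_fst {φ : Z → V} {u : Fin k → Z → V} {z : Z}
    (hφ : DifferentiableAt ℝ φ z) (hu : ∀ i, DifferentiableAt ℝ (u i) z) (w : Z) :
    IsPolynomialCurve k fun t =>
      fderiv ℝ (fun p : Z × ℝ => φ p.1 + ∑ i : Fin k, p.2 ^ ((i : ℕ) + 1) • u i p.1) (z, t) (w, 0) := by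
  simp only [fderiv_polynomialFamily hφ hu, zero_mul, zero_smul, smul_zero, add_zero]
  exact (IsPolynomialCurve.const _).add (IsPolynomialCurve.sum _ fun i _ =>
    ((IsPolynomialCurve.pow _).smul (IsPolynomialCurve.const (d := 0) _)).mono (by omega))

theorem isPolynomialCurve_fderiv_snd {φ : Z → V} {u : Fin k → Z → V} {z : Z}
    (hφ : DifferentiableAt ℝ φ z) (hu : ∀ i, DifferentiableAt ℝ (u i) z) :
    IsPolynomialCurve (k - 1) fun t =>
      fderiv ℝ (fun p : Z × ℝ => φ p.1 + ∑ i : Fin k, p.2 ^ ((i : ℕ) + 1) • u i p.1) (z, t) (0, 1) := by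
  simp only [fderiv_polynomialFamily hφ hu, map_zero, smul_zero, zero_add]
  exact IsPolynomialCurve.sum _ fun i _ =>
    ((IsPolynomialCurve.pow _).smul (IsPolynomialCurve.const (d := 0) _)).mono (by omega)

theorem contDiffOn_polynomialFamily {φ : Z → V} {u : Fin k → Z → V} {S : Set Z}
    (hφ : ContDiffOn ℝ ∞ φ S) (hu : ∀ i, ContDiffOn ℝ ∞ (u i) S) :
    ContDiffOn ℝ ∞ (fun p : Z × ℝ => φ p.1 + ∑ i : Fin k, p.2 ^ ((i : ℕ) + 1) • u i p.1)
      (S ×ˢ Set.univ) := by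
  have hfst : Set.MapsTo Prod.fst (S ×ˢ (Set.univ : Set ℝ)) S := fun p hp => hp.1
  exact (hφ.comp contDiffOn_fst hfst).add (ContDiffOn.sum fun i _ =>
    (contDiffOn_snd.pow _).smul ((hu i).comp contDiffOn_fst hfst))

end

theorem iteratedDeriv_comp_eq_zero_of_hasContactOrderAt {n N : ℕ} {G : Type*}
    [NormedAddCommGroup G] [NormedSpace ℝ G] {M : Set (EuclideanSpace ℝ (Fin n))}
    {γ : ℝ → EuclideanSpace ℝ (Fin n)} (hγ : ContDiff ℝ ∞ γ) (h : HasContactOrderAt N γ M)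
    {f : EuclideanSpace ℝ (Fin n) → G} (hf : ContDiffAt ℝ ∞ f (γ 0))
    (hfM : ∀ᶠ x in 𝓝 (γ 0), x ∈ M → f x = 0) {j : ℕ} (hj : j ≤ N) :
    iteratedDeriv j (fun t => f (γ t)) 0 = 0 := by
  obtain ⟨δ, hδ, hδM, hjet⟩ := h
  have h0 : γ 0 = δ 0 := by simpa using hjet 0 (Nat.zero_le N)
  rw [iteratedDeriv_comp_congr hf hγ.contDiffAt hδ.contDiffAt hjet hj]
  have h1 : (fun t => f (δ t)) =ᶠ[𝓝 0] fun _ => 0 := by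
    rw [h0] at hfM
    filter_upwards [hδ.continuous.continuousAt.eventually hfM] with t ht using ht (hδM t)
  rw [h1.iteratedDeriv_eq]
  cases j <;> simp

theorem eventually_mem_of_hasContactOrderAt {n m k : ℕ} (hmn : m ≤ n) (hk : 0 < k)
    {M : Set (EuclideanSpace ℝ (Fin n))} (hM : IsAnalyticSubmanifold m M)
    {v : Fin k → EuclideanSpace ℝ (Fin n) → EuclideanSpace ℝ (Fin n)}
    (hv : ∀ i, ContDiff ℝ ∞ (v i))
    (hcontact : ∀ x ∈ M,
      HasContactOrderAt (k * (m + 1)) (fun t => x + ∑ i : Fin k, t ^ ((i : ℕ) + 1) • v i x) M)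
    {p : EuclideanSpace ℝ (Fin n)} (hp : p ∈ M) :
    ∀ᶠ t in 𝓝 (0 : ℝ), p + ∑ i : Fin k, t ^ ((i : ℕ) + 1) • v i p ∈ M := by
  obtain ⟨U, hU, hpU, f, hf, hsurj, hMU⟩ := hM p hp
  have hMf : ∀ x ∈ U, x ∈ M ↔ f x = 0 := fun x hx =>
    ⟨fun h => (hMU.subset ⟨h, hx⟩).2, fun h => (hMU.superset ⟨hx, h⟩).1⟩
  obtain ⟨P, φ, S, V, C, hS, hpS, hV, hVU, hφ, hφp, hφS, hC⟩ :=
    exists_levelSet_parametrization hmn hU hf hpU (hsurj p hpU) ((hMf p hpU).1 hp)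
  have hφM : ∀ z ∈ S, φ z ∈ M := fun z hz =>
    (hMf _ (hVU (hφS z hz).1)).2 (hφS z hz).2.1
  let u : Fin k → (Fin m → ℝ) → EuclideanSpace ℝ (Fin n) := fun i z => v i (φ z)
  have hu : ∀ i, ContDiffOn ℝ ∞ (u i) S := fun i => (hv i).comp_contDiffOn hφ
  let Γ : (Fin m → ℝ) × ℝ → EuclideanSpace ℝ (Fin n) := fun q =>
    φ q.1 + ∑ i : Fin k, q.2 ^ ((i : ℕ) + 1) • u i q.1
  have hΓ : ContDiffOn ℝ ∞ Γ (S ×ˢ Set.univ) := contDiffOn_polynomialFamily hφ hu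
  have hΓ0 : ∀ z, Γ (z, 0) = φ z := fun z => by simp [Γ]
  have hSo : IsOpen (S ×ˢ (Set.univ : Set ℝ)) := hS.prod isOpen_univ
  set O := S ×ˢ (Set.univ : Set ℝ) ∩ Γ ⁻¹' V with hOdef
  have hO : IsOpen O := hΓ.continuousOn.isOpen_inter_preimage hSo hV
  have hfV : ∀ x ∈ V, ContDiffAt ℝ ∞ f x := fun x hx =>
    (hf x (hVU hx)).contDiffAt.of_le le_top
  have hF : ContDiffOn ℝ ∞ (fun q => f (Γ q)) O := fun q hq =>
    ((hfV _ hq.2).comp q (hΓ.contDiffAt (hSo.mem_nhds hq.1))).contDiffWithinAt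
  have hzO : ∀ z ∈ S, (z, (0 : ℝ)) ∈ O := fun z hz =>
    ⟨⟨hz, trivial⟩, by simpa [hΓ0] using (hφS z hz).1⟩
  have hvan : ∀ z, (z, (0 : ℝ)) ∈ O → ∀ j < k * (m + 1) + 1,
      iteratedDeriv j (fun t => f (Γ (z, t))) 0 = 0 := by
    intro z hz j hj
    refine iteratedDeriv_comp_eq_zero_of_hasContactOrderAt (γ := fun t => Γ (z, t)) ?_
      (hcontact (φ z) (hφM z hz.1.1)) (hfV _ hz.2) ?_ (Nat.le_of_lt_succ hj)
    · change ContDiff ℝ ∞ fun t : ℝ => φ z + ∑ i : Fin k, t ^ ((i : ℕ) + 1) • u i z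
      fun_prop
    · filter_upwards [hV.mem_nhds hz.2] with x hx using (hMf x (hVU hx)).1
  have hrel : ∀ q ∈ S ×ˢ (Set.univ : Set ℝ),
      (Matrix.of fun l j => P (fderiv ℝ Γ q (Pi.single j 1, 0)) l).det • fderiv ℝ Γ q (0, 1) =
        ∑ j, (Matrix.of fun l j => P (fderiv ℝ Γ q (Pi.single j 1, 0)) l).cramer
          (P (fderiv ℝ Γ q (0, 1))) j • fderiv ℝ Γ q (Pi.single j 1, 0) := by
    rintro ⟨z, t⟩ ⟨hz, -⟩
    have hφz : DifferentiableAt ℝ φ z :=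
      (hφ.contDiffAt (hS.mem_nhds hz)).differentiableAt (by simp)
    have huz : ∀ i, DifferentiableAt ℝ (u i) z := fun i =>
      ((hu i).contDiffAt (hS.mem_nhds hz)).differentiableAt (by simp)
    have hchain : ∀ w, (fun t => fderiv ℝ (fun q => f (Γ q)) (z, t) w) =ᶠ[𝓝 0]
        fun t => fderiv ℝ f (Γ (z, t)) (fderiv ℝ Γ (z, t) w) := by
      intro w
      filter_upwards [eventually_slice_mem hO (hzO z hz)] with t ht
      have h1 := HasFDerivAt.comp (z, t)
        ((hfV _ ht.2).differentiableAt (by simp)).hasFDerivAt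
        ((hΓ.contDiffAt (hSo.mem_nhds ht.1)).differentiableAt (by simp)).hasFDerivAt
      exact DFunLike.congr_fun h1.fderiv w
    refine det_smul_eq_sum_cramer_smul hk P (fun t => fderiv ℝ f (Γ (z, t)))
      (fun j t => fderiv ℝ Γ (z, t) (Pi.single j 1, 0)) (fun t => fderiv ℝ Γ (z, t) (0, 1)) C
      (fun j => isPolynomialCurve_fderiv_fst hφz huz _) (isPolynomialCurve_fderiv_snd hφz huz)
      ?_ (fun j => ?_) ?_ t
    · filter_upwards [eventually_slice_mem hO (hzO z hz)] with t ht using hC _ ht.2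
    · exact (isBigO_pow_fderiv_of_iteratedDeriv_eq_zero hO hF
        (fun z hz j hj => hvan z hz j (hj.trans (Nat.lt_succ_self _)))
        (hzO z hz) _).congr' (hchain _) EventuallyEq.rfl
    · exact (isBigO_pow_of_iteratedDeriv_eq_zero hO (contDiffOn_fderiv_apply hO hF (0, 1))
        (hzO z hz) (iteratedDeriv_partialDeriv_eq_zero hO hF (hzO z hz)
          (hvan z (hzO z hz)))).congr' (hchain _) EventuallyEq.rfl
  filter_upwards [eventually_exists_eq_of_cramer hS hpS hΓ P
    (fun z hz => by rw [hΓ0, (hφS z hz).2.2]) hrel] with t ht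
  obtain ⟨z, hz, hzt⟩ := ht
  have h1 : Γ (P p, t) = p + ∑ i : Fin k, t ^ ((i : ℕ) + 1) • v i p := by simp [Γ, u, hφp]
  rw [← h1, hzt, hΓ0]
  exact hφM z hz

/-- Identity theorem: an analytic curve which locally lies in a closed analytic submanifold
lies in it globally. -/
theorem IsAnalyticSubmanifold.forall_mem_of_eventually_mem {n m : ℕ}
    {M : Set (EuclideanSpace ℝ (Fin n))} (hM : IsAnalyticSubmanifold m M) (hMc : IsClosed M)
    {γ : ℝ → EuclideanSpace ℝ (Fin n)} (hγ : ∀ t, AnalyticAt ℝ γ t) {t₀ : ℝ}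
    (h0 : ∀ᶠ t in 𝓝 t₀, γ t ∈ M) (t : ℝ) : γ t ∈ M := by
  have hγc : Continuous γ := continuous_iff_continuousAt.2 fun t => (hγ t).continuousAt
  set A := {t | ∀ᶠ s in 𝓝 t, γ s ∈ M} with hA
  have hAo : IsOpen A := isOpen_setOfPred_eventually_nhds
  have hAM : A ⊆ γ ⁻¹' M := fun s hs => hs.self_of_nhds
  have hAc : IsClosed A := by
    refine isClosed_of_closure_subset fun s hs => ?_
    have hsM : γ s ∈ M := (hMc.preimage hγc).closure_subset_iff.2 hAM hs
    obtain ⟨U, hU, hsU, f, hf, -, hMU⟩ := hM _ hsM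
    have hUs : ∀ᶠ r in 𝓝 s, γ r ∈ U := hγc.continuousAt.eventually_mem (hU.mem_nhds hsU)
    have hfγ : AnalyticAt ℝ (fun r => f (γ r)) s :=
      AnalyticAt.comp (g := f) (f := γ) (hf _ hsU) (hγ s)
    rcases hfγ.eventually_eq_zero_or_eventually_ne_zero with h | h
    · filter_upwards [h, hUs] with r h1 h2 using (hMU.superset ⟨h2, h1⟩).1
    · by_contra hsA
      have hfr : ∃ᶠ r in 𝓝[≠] s, r ∈ A :=
        frequently_nhdsWithin_iff.2 ((mem_closure_iff_frequently.1 hs).mono fun r hr =>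
          ⟨hr, fun h => hsA (h ▸ hr)⟩)
      obtain ⟨r, hrA, h1, h2⟩ :=
        (hfr.and_eventually (h.and (hUs.filter_mono nhdsWithin_le_nhds))).exists
      exact h1 (hMU.subset ⟨hAM hrA, h2⟩).2
  have hAu : A = Set.univ := IsClopen.eq_univ ⟨hAc, hAo⟩ ⟨t₀, h0⟩
  exact hAM (hAu ▸ Set.mem_univ t)

/-- Generalized Monge–Cayley–Salmon theorem: if every point `x` of a proper (closed)
`m`-dimensional real-analytic submanifold `M ⊆ ℝⁿ` admits a class-`k` curve
`γ_x(t) = x + t·v₁(x) + ⋯ + tᵏ·v_k(x)` (with `v₁, …, v_k` smooth) having contact of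
order `k(m+1)` with `M` at `t = 0`, then each curve `γ_x` lies entirely in `M`. -/
theorem generalized_monge_cayley_salmon {n m k : ℕ} (hmn : m ≤ n)
    (M : Set (EuclideanSpace ℝ (Fin n))) (hMclosed : IsClosed M)
    (hM : IsAnalyticSubmanifold m M)
    (v : Fin k → EuclideanSpace ℝ (Fin n) → EuclideanSpace ℝ (Fin n))
    (hv : ∀ i, ContDiff ℝ (⊤ : ℕ∞) (v i))
    (γ : EuclideanSpace ℝ (Fin n) → ℝ → EuclideanSpace ℝ (Fin n))
    (hγ : ∀ x t, γ x t = x + ∑ i : Fin k, t ^ ((i : ℕ) + 1) • v i x)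
    (hcontact : ∀ x ∈ M, HasContactOrderAt (k * (m + 1)) (γ x) M) :
    ∀ x ∈ M, ∀ t : ℝ, γ x t ∈ M := by
  intro x hx
  obtain rfl : γ = fun x t => x + ∑ i : Fin k, t ^ ((i : ℕ) + 1) • v i x :=
    funext fun x => funext fun t => hγ x t
  rcases Nat.eq_zero_or_pos k with rfl | hk
  · simpa using hx
  refine hM.forall_mem_of_eventually_mem hMclosed (t₀ := 0) (fun t => ?_)
    (eventually_mem_of_hasContactOrderAt hmn hk hM hv hcontact hx)
  exact analyticAt_const.add (Finset.analyticAt_fun_sum _ fun i _ =>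
    (analyticAt_id.pow _).smul analyticAt_const)
end

section
/- (Monge–Cayley–Salmon) Let M ⊆ ℝ³ be a proper (i.e., closed in ℝ³) 2-dimensional real-analytic submanifold. Let v : ℝ³ → ℝ³ be a C^∞ map with v(x) ≠ 0 for all x ∈ M, and for x ∈ M let ℓ_x be the line ℓ_x = {x + t·v(x) : t ∈ ℝ}. Assume that for every x ∈ M the curve t ↦ x + t·v(x) has contact of order 3 with M at t = 0. Then ℓ_x ⊆ M for every x ∈ M. -/
open Filter Topology Set

section LevelSet

variable {E : Type*} [NormedAddCommGroup E] [NormedSpace ℝ E]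

variable [CompleteSpace E] in
/-- A function vanishing on a regular level set has zero derivative in tangent directions. -/
theorem fderiv_apply_eq_zero_of_vanish_on_zeroSet {g φ : E → ℝ} {x u : E} {φ' : E →L[ℝ] ℝ}
    (hg : ContDiffAt ℝ 1 g x) (hg' : fderiv ℝ g x ≠ 0) (hx : g x = 0)
    (hφ : HasStrictFDerivAt φ φ' x)
    (hvan : ∀ᶠ y in 𝓝 x, g y = 0 → φ y = 0)
    (hu : fderiv ℝ g x u = 0) : φ' u = 0 := by
  have hextr : IsLocalExtrOn φ {y | g y = g x} x := by
    left
    change ∀ᶠ y in 𝓝[{y | g y = g x}] x, φ x ≤ φ y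
    rw [eventually_nhdsWithin_iff]
    filter_upwards [hvan] with y hy hgy
    have hgy' : g y = g x := hgy
    rw [hvan.self_of_nhds hx, hy (hgy'.trans hx)]
  obtain ⟨a, b, hab, hsum⟩ := hextr.exists_multipliers_of_hasStrictFDerivAt_1d
    (hg.hasStrictFDerivAt one_ne_zero) hφ
  have hb : b ≠ 0 := by
    rintro rfl
    have ha : a ≠ 0 := by
      rintro rfl
      exact hab rfl
    simp only [zero_smul, add_zero, smul_eq_zero] at hsum
    exact hsum.elim ha hg'
  have := congrArg (fun L : E →L[ℝ] ℝ => L u) hsum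
  simpa [hu, hb] using this

/-- If all derivatives of an analytic function vanish along `u` at `x`, the function vanishes
on a segment through `x` in direction `u`. -/
theorem AnalyticAt.eventually_line_eq_zero {g : E → ℝ} {x u : E} (hg : AnalyticAt ℝ g x)
    (h : ∀ k, iteratedFDeriv ℝ k g x (fun _ => u) = 0) :
    ∀ᶠ t : ℝ in 𝓝 0, g (x + t • u) = 0 := by
  obtain ⟨p, r, hp⟩ := hg
  have hc : Tendsto (fun t : ℝ => t • u) (𝓝 0) (𝓝 0) := by
    have : Continuous fun t : ℝ => t • u := by fun_prop
    simpa using this.tendsto 0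
  filter_upwards [hc (Metric.eball_mem_nhds (0 : E) hp.r_pos)] with t ht
  have hs := hp.hasSum_iteratedFDeriv ht
  have hz : ∀ n : ℕ, iteratedFDeriv ℝ n g x (fun _ => t • u) = 0 := by
    intro n
    rw [(iteratedFDeriv ℝ n g x).map_smul_univ (fun _ => t) (fun _ => u), h n, smul_zero]
  simp only [hz, smul_zero] at hs
  exact hs.unique hasSum_zero

variable [CompleteSpace E]

/-- If a vector field `V` is tangent to the zero set of `g` and `V` is parallel to its own
derivative along itself there, then lines in direction `V` lie locally in the zero set. -/
theorem eventually_line_eq_zero_of_geodesic {g : E → ℝ} {V : E → E} {O : Set E}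
    (hO : IsOpen O) (hg : AnalyticOnNhd ℝ g O) (hg' : ∀ x ∈ O, fderiv ℝ g x ≠ 0)
    (hV : ∀ x ∈ O, ContDiffAt ℝ 1 V x)
    (htan : ∀ x ∈ O, g x = 0 → fderiv ℝ g x (V x) = 0)
    (hgeo : ∀ x ∈ O, g x = 0 → ∃ c : ℝ, fderiv ℝ V x (V x) = c • V x)
    {x : E} (hx : x ∈ O) (hgx : g x = 0) :
    ∀ᶠ t : ℝ in 𝓝 0, g (x + t • V x) = 0 := by
  refine (hg x hx).eventually_line_eq_zero fun k => ?_
  suffices ∀ y ∈ O, g y = 0 → iteratedFDeriv ℝ k g y (fun _ => V y) = 0 from this x hx hgx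
  clear hgx hx x
  induction k with
  | zero => intro y _ hgy; simpa using hgy
  | succ k ih =>
    intro y hy hgy
    obtain ⟨c, hc⟩ := hgeo y hy hgy
    have hA : AnalyticAt ℝ (iteratedFDeriv ℝ k g) y := hg.iteratedFDeriv k y hy
    have hd := hA.hasStrictFDerivAt.continuousMultilinearMap_apply
      (fun _ : Fin k => (hV y hy).hasStrictFDerivAt one_ne_zero)
    have key := fderiv_apply_eq_zero_of_vanish_on_zeroSet (hg y hy).contDiffAt (hg' y hy) hgy
      hd (by filter_upwards [hO.mem_nhds hy] with z hz using ih z hz) (htan y hy hgy)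
    have hi := ih y hy hgy
    rw [iteratedFDeriv_succ_apply_left]
    change fderiv ℝ (iteratedFDeriv ℝ k g) y (V y) (fun _ => V y) = 0
    simpa [hc, hi, ContinuousMultilinearMap.toContinuousLinearMap] using key

/-- Differentiating the tangency condition `g' a = 0` in a tangent direction. -/
theorem fderiv_tangency_eq_zero {g : E → ℝ} {a : E → E} {O : Set E}
    (hO : IsOpen O) (hg : AnalyticOnNhd ℝ g O) (hg' : ∀ x ∈ O, fderiv ℝ g x ≠ 0)
    (ha : ContDiff ℝ 1 a) (h : ∀ x ∈ O, g x = 0 → fderiv ℝ g x (a x) = 0)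
    {x u : E} (hx : x ∈ O) (hgx : g x = 0) (hu : fderiv ℝ g x u = 0) :
    fderiv ℝ (fderiv ℝ g) x u (a x) + fderiv ℝ g x (fderiv ℝ a x u) = 0 := by
  have hd := (hg.fderiv x hx).hasStrictFDerivAt.clm_apply
    (ha.contDiffAt.hasStrictFDerivAt (x := x) one_ne_zero)
  have key := fderiv_apply_eq_zero_of_vanish_on_zeroSet (hg x hx).contDiffAt (hg' x hx) hgx
    hd (by filter_upwards [hO.mem_nhds hx] with z hz using h z hz) hu
  simpa [add_comm] using key

/-- Differentiating the conjugacy condition `g'' a b = 0` in a tangent direction. -/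
theorem fderiv_conjugacy_eq_zero {g : E → ℝ} {a b : E → E} {O : Set E}
    (hO : IsOpen O) (hg : AnalyticOnNhd ℝ g O) (hg' : ∀ x ∈ O, fderiv ℝ g x ≠ 0)
    (ha : ContDiff ℝ 1 a) (hb : ContDiff ℝ 1 b)
    (h : ∀ x ∈ O, g x = 0 → fderiv ℝ (fderiv ℝ g) x (a x) (b x) = 0)
    {x u : E} (hx : x ∈ O) (hgx : g x = 0) (hu : fderiv ℝ g x u = 0) :
    fderiv ℝ (fderiv ℝ (fderiv ℝ g)) x u (a x) (b x)
      + fderiv ℝ (fderiv ℝ g) x (fderiv ℝ a x u) (b x)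
      + fderiv ℝ (fderiv ℝ g) x (a x) (fderiv ℝ b x u) = 0 := by
  have hd := ((hg.fderiv.fderiv x hx).hasStrictFDerivAt.clm_apply
    (ha.contDiffAt.hasStrictFDerivAt (x := x) one_ne_zero)).clm_apply
    (hb.contDiffAt.hasStrictFDerivAt (x := x) one_ne_zero)
  have key := fderiv_apply_eq_zero_of_vanish_on_zeroSet (hg x hx).contDiffAt (hg' x hx) hgx
    hd (by filter_upwards [hO.mem_nhds hx] with z hz using h z hz) hu
  simp at key
  linarith

/-- Pointwise consequences of third order contact for the direction field `v` and its
acceleration `w = Dv(v)`: `w` is tangent and conjugate to `v`. -/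
theorem acceleration_tangent_and_conjugate {g : E → ℝ} {v : E → E} {O : Set E}
    (hO : IsOpen O) (hg : AnalyticOnNhd ℝ g O) (hg' : ∀ x ∈ O, fderiv ℝ g x ≠ 0)
    (hv : ContDiff ℝ 1 v)
    (h1 : ∀ x ∈ O, g x = 0 → fderiv ℝ g x (v x) = 0)
    (h2 : ∀ x ∈ O, g x = 0 → fderiv ℝ (fderiv ℝ g) x (v x) (v x) = 0)
    (h3 : ∀ x ∈ O, g x = 0 → fderiv ℝ (fderiv ℝ (fderiv ℝ g)) x (v x) (v x) (v x) = 0)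
    {x : E} (hx : x ∈ O) (hgx : g x = 0) :
    fderiv ℝ g x (fderiv ℝ v x (v x)) = 0 ∧
      fderiv ℝ (fderiv ℝ g) x (fderiv ℝ v x (v x)) (v x) = 0 := by
  have e1 := fderiv_tangency_eq_zero hO hg hg' hv h1 hx hgx (h1 x hx hgx)
  have e2 := fderiv_conjugacy_eq_zero hO hg hg' hv hv h2 hx hgx (h1 x hx hgx)
  have hs := ((hg x hx).contDiffAt (n := ⊤)).isSymmSndFDerivAt_of_omega (v x)
    (fderiv ℝ v x (v x))
  rw [h2 x hx hgx] at e1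
  rw [h3 x hx hgx] at e2
  constructor <;> linarith

/-- If the direction field `v` of lines with third order contact and its acceleration span the
tangent planes, then the second fundamental form vanishes. -/
theorem second_fderiv_eq_zero_of_span {g : E → ℝ} {v : E → E} {O : Set E}
    (hO : IsOpen O) (hg : AnalyticOnNhd ℝ g O) (hg' : ∀ x ∈ O, fderiv ℝ g x ≠ 0)
    (hv : ContDiff ℝ 2 v)
    (h1 : ∀ x ∈ O, g x = 0 → fderiv ℝ g x (v x) = 0)
    (h2 : ∀ x ∈ O, g x = 0 → fderiv ℝ (fderiv ℝ g) x (v x) (v x) = 0)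
    (h3 : ∀ x ∈ O, g x = 0 → fderiv ℝ (fderiv ℝ (fderiv ℝ g)) x (v x) (v x) (v x) = 0)
    {x : E} (hx : x ∈ O) (hgx : g x = 0)
    (hspan : ∀ u, fderiv ℝ g x u = 0 → ∃ a b : ℝ, u = a • v x + b • fderiv ℝ v x (v x))
    {u u' : E} (hu : fderiv ℝ g x u = 0) (hu' : fderiv ℝ g x u' = 0) :
    fderiv ℝ (fderiv ℝ g) x u u' = 0 := by
  have hv1 : ContDiff ℝ 1 v := hv.of_le (by norm_num)
  set w : E → E := fun y => fderiv ℝ v y (v y)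
  have hw1 : ContDiff ℝ 1 w := (hv.fderiv_right (m := 1) (by norm_num)).clm_apply hv1
  have hac : ∀ y ∈ O, g y = 0 → fderiv ℝ g y (w y) = 0 ∧
      fderiv ℝ (fderiv ℝ g) y (w y) (v y) = 0 := fun y hy hgy =>
    acceleration_tangent_and_conjugate hO hg hg' hv1 h1 h2 h3 hy hgy
  have hs : ∀ a b, fderiv ℝ (fderiv ℝ g) x a b = fderiv ℝ (fderiv ℝ g) x b a := fun a b =>
    ((hg x hx).contDiffAt (n := ⊤)).isSymmSndFDerivAt_of_omega a b
  have hs3 : fderiv ℝ (fderiv ℝ (fderiv ℝ g)) x (v x) (w x) =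
      fderiv ℝ (fderiv ℝ (fderiv ℝ g)) x (w x) (v x) :=
    ((hg.fderiv x hx).contDiffAt (n := ⊤)).isSymmSndFDerivAt_of_omega _ _
  obtain ⟨hwt, hwv⟩ := hac x hx hgx
  have hvt := h1 x hx hgx
  have hvv := h2 x hx hgx
  have hvw : fderiv ℝ (fderiv ℝ g) x (v x) (w x) = 0 := by rw [hs, hwv]
  have hker : ∀ z, fderiv ℝ g x z = 0 → fderiv ℝ (fderiv ℝ g) x (v x) z = 0 := by
    intro z hz
    obtain ⟨a, b, rfl⟩ := hspan z hz
    have : fderiv ℝ (fderiv ℝ g) x (v x) (fderiv ℝ v x (v x)) = 0 := hvw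
    simp [hvv, this]
  have t1 := fderiv_tangency_eq_zero hO hg hg' hw1 (fun y hy hgy => (hac y hy hgy).1) hx hgx hvt
  have t2 := fderiv_tangency_eq_zero hO hg hg' hv1 h1 hx hgx hwt
  rw [hvw, zero_add] at t1
  rw [hwv, zero_add] at t2
  have c1 := fderiv_conjugacy_eq_zero hO hg hg' hw1 hv1 (fun y hy hgy => (hac y hy hgy).2)
    hx hgx hvt
  have c2 := fderiv_conjugacy_eq_zero hO hg hg' hv1 hv1 h2 hx hgx hwt
  rw [hs3, hs (fderiv ℝ w x (v x)), hker _ t1] at c1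
  rw [hs (fderiv ℝ v x (w x)), hker _ t2] at c2
  have hww : fderiv ℝ (fderiv ℝ g) x (w x) (w x) = 0 := by
    have : fderiv ℝ (fderiv ℝ g) x (w x) (fderiv ℝ v x (v x)) =
      fderiv ℝ (fderiv ℝ g) x (w x) (w x) := rfl
    linarith
  obtain ⟨a, b, rfl⟩ := hspan u hu
  obtain ⟨a', b', rfl⟩ := hspan u' hu'
  change fderiv ℝ (fderiv ℝ g) x (a • v x + b • w x) (a' • v x + b' • w x) = 0
  simp [hvv, hvw, hwv, hww]

/-- If the second fundamental form vanishes identically, the zero set locally contains all its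
tangent lines. -/
theorem eventually_line_eq_zero_of_flat {g : E → ℝ} {O : Set E}
    (hO : IsOpen O) (hg : AnalyticOnNhd ℝ g O) (hg' : ∀ x ∈ O, fderiv ℝ g x ≠ 0)
    (hflat : ∀ x ∈ O, g x = 0 → ∀ u u', fderiv ℝ g x u = 0 → fderiv ℝ g x u' = 0 →
      fderiv ℝ (fderiv ℝ g) x u u' = 0)
    {x u : E} (hx : x ∈ O) (hgx : g x = 0) (hu : fderiv ℝ g x u = 0) :
    ∀ᶠ t : ℝ in 𝓝 0, g (x + t • u) = 0 := by
  have hunit : ∀ y ∈ O, ∃ c, fderiv ℝ g y c = 1 := fun y hy =>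
    (fderiv ℝ g y).toLinearMap.surjective 
      (fun h => hg' y hy (ContinuousLinearMap.coe_injective h)) 1
  obtain ⟨c, hc⟩ := hunit x hx
  set V : E → E := fun y => fderiv ℝ g y c • u - fderiv ℝ g y u • c with hVdef
  have hVx : V x = u := by simp [hVdef, hc, hu]
  have hVt : ∀ y, fderiv ℝ g y (V y) = 0 := fun y => by simp [hVdef, mul_comm]
  have hd : ∀ y ∈ O, ∀ z, fderiv ℝ V y z =
      fderiv ℝ (fderiv ℝ g) y z c • u - fderiv ℝ (fderiv ℝ g) y z u • c := by
    intro y hy z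
    have h := (hg.fderiv y hy).differentiableAt.hasFDerivAt
    have := ((h.clm_apply (hasFDerivAt_const c y)).smul_const u).sub
      ((h.clm_apply (hasFDerivAt_const u y)).smul_const c)
    rw [HasFDerivAt.fderiv (f := V) this]
    simp
  rw [← hVx]
  refine eventually_line_eq_zero_of_geodesic hO hg hg' ?_ (fun y _ _ => hVt y) ?_ hx hgx
  · intro y hy
    have h : ContDiffAt ℝ 1 (fderiv ℝ g) y := (hg.fderiv y hy).contDiffAt
    exact ((h.clm_apply contDiffAt_const).smul contDiffAt_const).sub
      ((h.clm_apply contDiffAt_const).smul contDiffAt_const)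
  · intro y hy hgy
    obtain ⟨e, he⟩ := hunit y hy
    have hmul : ∀ z, fderiv ℝ (fderiv ℝ g) y (V y) z =
        fderiv ℝ (fderiv ℝ g) y (V y) e * fderiv ℝ g y z := by
      intro z
      have := hflat y hy hgy (V y) (z - fderiv ℝ g y z • e) (hVt y) (by simp [he])
      simp only [map_sub, map_smul, smul_eq_mul] at this
      linarith
    refine ⟨fderiv ℝ (fderiv ℝ g) y (V y) e, ?_⟩
    rw [hd y hy, hmul c, hmul u, smul_sub, smul_smul, smul_smul]

end LevelSet

section Contact

/-- If `F` vanishes near `t`, so does its derivative. -/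
theorem eventually_deriv_eq_zero {F F' : ℝ → ℝ} {t : ℝ} (h : ∀ᶠ s in 𝓝 t, F s = 0)
    (hF : ∀ᶠ s in 𝓝 t, HasDerivAt F (F' s) s) : ∀ᶠ s in 𝓝 t, F' s = 0 := by
  filter_upwards [eventually_eventually_nhds.2 h, hF] with s hs hFs
  have : HasDerivAt F 0 s :=
    (hasDerivAt_const s (0 : ℝ)).congr_of_eventuallyEq hs
  exact hFs.unique this

/-- Contact of order three of a line with a zero set, expressed through derivatives of the
defining function. -/
theorem fderiv_eq_zero_of_curve {E : Type*} [NormedAddCommGroup E] [NormedSpace ℝ E]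
    {g : E → ℝ} {O : Set E} (hO : IsOpen O) (hg : AnalyticOnNhd ℝ g O)
    {δ : ℝ → E} (hδ : ContDiff ℝ (⊤ : ℕ∞) δ) {x u : E} (hx : x ∈ O)
    (h0 : δ 0 = x) (h1 : iteratedDeriv 1 δ 0 = u) (h2 : iteratedDeriv 2 δ 0 = 0)
    (h3 : iteratedDeriv 3 δ 0 = 0) (hz : ∀ t, δ t ∈ O → g (δ t) = 0) :
    fderiv ℝ g x u = 0 ∧ fderiv ℝ (fderiv ℝ g) x u u = 0 ∧
      fderiv ℝ (fderiv ℝ (fderiv ℝ g)) x u u u = 0 := by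
  have hd : ∀ (k : ℕ) t, HasDerivAt (iteratedDeriv k δ) (iteratedDeriv (k + 1) δ t) t := by
    intro k t
    rw [iteratedDeriv_succ]
    exact (hδ.differentiable_iteratedDeriv k
      (by exact_mod_cast WithTop.coe_lt_top k) t).hasDerivAt
  have hd0 : ∀ t, HasDerivAt δ (iteratedDeriv 1 δ t) t := by simpa using hd 0
  have hO' : ∀ᶠ t in 𝓝 (0 : ℝ), δ t ∈ O :=
    hδ.continuous.continuousAt.preimage_mem_nhds (hO.mem_nhds (h0 ▸ hx))
  have e0 : ∀ᶠ t in 𝓝 (0 : ℝ), g (δ t) = 0 := hO'.mono hz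
  have e1 : ∀ᶠ t in 𝓝 (0 : ℝ), fderiv ℝ g (δ t) (iteratedDeriv 1 δ t) = 0 := by
    refine eventually_deriv_eq_zero e0 ?_
    filter_upwards [hO'] with t ht
    exact (hg _ ht).differentiableAt.hasFDerivAt.comp_hasDerivAt t (hd0 t)
  have e2 : ∀ᶠ t in 𝓝 (0 : ℝ), fderiv ℝ (fderiv ℝ g) (δ t) (iteratedDeriv 1 δ t)
      (iteratedDeriv 1 δ t) + fderiv ℝ g (δ t) (iteratedDeriv 2 δ t) = 0 := by
    refine eventually_deriv_eq_zero e1 ?_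
    filter_upwards [hO'] with t ht
    exact ((hg.fderiv _ ht).differentiableAt.hasFDerivAt.comp_hasDerivAt t (hd0 t)).clm_apply
      (hd 1 t)
  have e3 : ∀ᶠ t in 𝓝 (0 : ℝ),
      (fderiv ℝ (fderiv ℝ (fderiv ℝ g)) (δ t) (iteratedDeriv 1 δ t) (iteratedDeriv 1 δ t)
        + fderiv ℝ (fderiv ℝ g) (δ t) (iteratedDeriv 2 δ t)) (iteratedDeriv 1 δ t)
      + fderiv ℝ (fderiv ℝ g) (δ t) (iteratedDeriv 1 δ t) (iteratedDeriv 2 δ t)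
      + (fderiv ℝ (fderiv ℝ g) (δ t) (iteratedDeriv 1 δ t) (iteratedDeriv 2 δ t)
        + fderiv ℝ g (δ t) (iteratedDeriv 3 δ t)) = 0 := by
    refine eventually_deriv_eq_zero e2 ?_
    filter_upwards [hO'] with t ht
    have a1 := (hg.fderiv _ ht).differentiableAt.hasFDerivAt.comp_hasDerivAt t (hd0 t)
    have a2 := (hg.fderiv.fderiv _ ht).differentiableAt.hasFDerivAt.comp_hasDerivAt t (hd0 t)
    exact ((a2.clm_apply (hd 1 t)).clm_apply (hd 1 t)).add (a1.clm_apply (hd 2 t))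
  have r1 := e1.self_of_nhds
  have r2 := e2.self_of_nhds
  have r3 := e3.self_of_nhds
  rw [h0, h1] at r1
  rw [h0, h1, h2] at r2
  rw [h0, h1, h2, h3] at r3
  exact ⟨r1, by simpa using r2, by simpa using r3⟩

/-- The line with third order contact annihilates the first three derivatives of the defining
function. -/
theorem HasContactOrderAt.fderiv_eq_zero {n : ℕ} {M O : Set (EuclideanSpace ℝ (Fin n))}
    {x u : EuclideanSpace ℝ (Fin n)} (h : HasContactOrderAt 3 (fun t => x + t • u) M)
    {g : EuclideanSpace ℝ (Fin n) → ℝ} (hO : IsOpen O) (hg : AnalyticOnNhd ℝ g O)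
    (hz : ∀ y ∈ O, y ∈ M → g y = 0) (hx : x ∈ O) :
    fderiv ℝ g x u = 0 ∧ fderiv ℝ (fderiv ℝ g) x u u = 0 ∧
      fderiv ℝ (fderiv ℝ (fderiv ℝ g)) x u u u = 0 := by
  obtain ⟨δ, hδ, hδM, hj⟩ := h
  have d1 : iteratedDeriv 1 (fun t : ℝ => x + t • u) = fun _ => u := by
    funext t
    rw [iteratedDeriv_one]
    simpa using (((hasDerivAt_id t).smul_const u).const_add x).deriv
  have d2 : iteratedDeriv 2 (fun t : ℝ => x + t • u) = fun _ => 0 := by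
    funext t
    rw [iteratedDeriv_succ, d1, deriv_const]
  have d3 : iteratedDeriv 3 (fun t : ℝ => x + t • u) = fun _ => 0 := by
    funext t
    rw [iteratedDeriv_succ, d2, deriv_const]
  refine fderiv_eq_zero_of_curve hO hg hδ hx ?_ ?_ ?_ ?_ fun t ht => hz _ ht (hδM t)
  · simpa using (hj 0 (by norm_num)).symm
  · rw [← hj 1 (by norm_num), d1]
  · rw [← hj 2 (by norm_num), d2]
  · rw [← hj 3 le_rfl, d3]

end Contact

section Surface

variable {M : Set (EuclideanSpace ℝ (Fin 3))}

/-- A surface in `ℝ³` is locally the zero set of a regular real-valued analytic function. -/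
theorem IsAnalyticSubmanifold.exists_defining_function (hM : IsAnalyticSubmanifold 2 M)
    {p : EuclideanSpace ℝ (Fin 3)} (hp : p ∈ M) :
    ∃ (U : Set (EuclideanSpace ℝ (Fin 3))) (g : EuclideanSpace ℝ (Fin 3) → ℝ),
      IsOpen U ∧ p ∈ U ∧ AnalyticOnNhd ℝ g U ∧ (∀ x ∈ U, fderiv ℝ g x ≠ 0) ∧
      ∀ x ∈ U, x ∈ M ↔ g x = 0 := by
  obtain ⟨U, hU, hpU, f, hf, hsurj, hMU⟩ := hM p hp
  let L : EuclideanSpace ℝ (Fin (3 - 2)) →L[ℝ] ℝ := EuclideanSpace.proj (0 : Fin 1)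
  refine ⟨U, fun y => L (f y), hU, hpU, ?_, ?_, ?_⟩
  · exact fun y hy => (L.analyticAt _).comp (hf y hy)
  · intro y hy h0
    have hd : fderiv ℝ (fun y => L (f y)) y = L.comp (fderiv ℝ f y) :=
      (L.hasFDerivAt.comp y (hf y hy).differentiableAt.hasFDerivAt).fderiv
    rw [hd] at h0
    obtain ⟨z, hz⟩ := hsurj y hy (EuclideanSpace.single (0 : Fin 1) (1 : ℝ))
    have h := DFunLike.congr_fun h0 z
    rw [ContinuousLinearMap.comp_apply, hz] at h
    simp [L] at h
  · intro y hy
    have h1 : y ∈ M ↔ f y = 0 := by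
      have := Set.ext_iff.1 hMU y
      simpa [hy] using this
    rw [h1]
    refine ⟨fun h => by simp [h], fun h => ?_⟩
    ext i
    have hi : i = (0 : Fin 1) := Subsingleton.elim (α := Fin 1) _ _
    rw [hi]
    exact h

/-- A closed analytic surface containing a segment of a line contains the line. -/
theorem IsAnalyticSubmanifold.line_subset (hMc : IsClosed M) (hM : IsAnalyticSubmanifold 2 M)
    {x u : EuclideanSpace ℝ (Fin 3)} (h : ∀ᶠ t : ℝ in 𝓝 0, x + t • u ∈ M) (t : ℝ) :
    x + t • u ∈ M := by
  set S : Set ℝ := {t | ∀ᶠ s in 𝓝 t, x + s • u ∈ M}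
  have hline : Continuous fun t : ℝ => x + t • u := by fun_prop
  have hSo : IsOpen S := isOpen_iff_mem_nhds.2 fun t ht => eventually_eventually_nhds.2 ht
  have hSM : ∀ t ∈ S, x + t • u ∈ M := fun t ht => ht.self_of_nhds
  have hSc : IsClosed S := by
    refine isClosed_of_closure_subset fun t₀ ht₀ => ?_
    by_cases hmem : t₀ ∈ S
    · exact hmem
    have hp : x + t₀ • u ∈ M := closure_minimal hSM (hMc.preimage hline) ht₀
    obtain ⟨U, g, hU, hpU, hg, -, hgM⟩ := hM.exists_defining_function hp
    have hnear : ∀ᶠ s in 𝓝 t₀, x + s • u ∈ U :=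
      hline.continuousAt.preimage_mem_nhds (hU.mem_nhds hpU)
    have hga : AnalyticAt ℝ (fun s : ℝ => g (x + s • u)) t₀ := by
      refine AnalyticAt.fun_comp (hg _ hpU) ?_
      fun_prop
    have hfr : ∃ᶠ s in 𝓝[≠] t₀, g (x + s • u) = 0 := by
      rw [frequently_nhdsWithin_iff]
      refine ((mem_closure_iff_frequently.1 ht₀).and_eventually hnear).mono fun s hs => ?_
      refine ⟨(hgM _ hs.2).1 (hSM s hs.1), ?_⟩
      rintro rfl
      exact hmem hs.1
    have hev := hga.frequently_zero_iff_eventually_zero.1 hfr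
    filter_upwards [hev, hnear] with s hs hsU using (hgM _ hsU).2 hs
  have huniv : S = univ := IsClopen.eq_univ ⟨hSc, hSo⟩ ⟨0, h⟩
  exact hSM t (huniv ▸ mem_univ t)

/-- Two independent vectors in the kernel of a nonzero functional on `ℝ³` span it. -/
theorem exists_eq_smul_add_smul_of_mem_ker {L : EuclideanSpace ℝ (Fin 3) →L[ℝ] ℝ} (hL : L ≠ 0)
    {a b u : EuclideanSpace ℝ (Fin 3)} (hab : LinearIndependent ℝ ![a, b])
    (ha : L a = 0) (hb : L b = 0) (hu : L u = 0) : ∃ s t : ℝ, u = s • a + t • b := by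
  have hL' : (L : EuclideanSpace ℝ (Fin 3) →ₗ[ℝ] ℝ) ≠ 0 := fun h =>
    hL (ContinuousLinearMap.coe_injective h)
  have hle : Submodule.span ℝ (Set.range ![a, b]) ≤
      LinearMap.ker (L : EuclideanSpace ℝ (Fin 3) →ₗ[ℝ] ℝ) := by
    rw [Submodule.span_le]
    rintro _ ⟨i, rfl⟩
    fin_cases i <;> simpa
  have h1 := finrank_span_eq_card hab
  have h2 := Module.Dual.finrank_ker_add_one_of_ne_zero hL'
  have heq := Submodule.eq_of_le_of_finrank_eq hle (by simp at h1 h2 ⊢; omega)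
  have hmem : u ∈ Submodule.span ℝ (Set.range ![a, b]) := by
    rw [heq]
    exact hu
  simp only [Matrix.range_cons, Matrix.range_empty, union_empty, singleton_union,
    Submodule.mem_span_pair] at hmem
  obtain ⟨s, t, h⟩ := hmem
  exact ⟨s, t, h.symm⟩

end Surface

/-- Monge–Cayley–Salmon theorem: let `M ⊆ ℝ³` be a proper (closed) `2`-dimensional
real-analytic submanifold and `v : ℝ³ → ℝ³` a smooth map, nonvanishing on `M`, such that
for every `x ∈ M` the line `t ↦ x + t·v(x)` has contact of order `3` with `M` at `t = 0`.
Then every line `ℓ_x = {x + t·v(x) : t ∈ ℝ}` is contained in `M`. -/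
theorem monge_cayley_salmon
    (M : Set (EuclideanSpace ℝ (Fin 3))) (hMclosed : IsClosed M)
    (hM : IsAnalyticSubmanifold 2 M)
    (v : EuclideanSpace ℝ (Fin 3) → EuclideanSpace ℝ (Fin 3))
    (hv : ContDiff ℝ (⊤ : ℕ∞) v) (hv0 : ∀ x ∈ M, v x ≠ 0)
    (hcontact : ∀ x ∈ M, HasContactOrderAt 3 (fun t => x + t • v x) M) :
    ∀ x ∈ M, ∀ t : ℝ, x + t • v x ∈ M := by
  have hv1 : ContDiff ℝ 1 v := contDiff_infty.1 hv 1
  have hv2 : ContDiff ℝ 2 v := contDiff_infty.1 hv 2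
  set w : EuclideanSpace ℝ (Fin 3) → EuclideanSpace ℝ (Fin 3) :=
    fun y => fderiv ℝ v y (v y)
  have hwc : Continuous w := ((hv2.fderiv_right (m := 1) (by norm_num)).clm_apply hv1).continuous
  set I : Set (EuclideanSpace ℝ (Fin 3)) := {y | LinearIndependent ℝ ![v y, w y]}
  have hIo : IsOpen I := by
    refine isOpen_setOfPred_linearIndependent.preimage
      (f := fun y => (![v y, w y] : Fin 2 → EuclideanSpace ℝ (Fin 3))) ?_
    exact continuous_pi fun i => by
      fin_cases i
      · exact hv.continuous
      · exact hwc
  -- lines through points where `v` and its acceleration are independent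
  have hindep : ∀ x ∈ M, x ∈ I → ∀ t : ℝ, x + t • v x ∈ M := by
    intro x hxM hxI
    obtain ⟨U, g, hU, hxU, hg, hg', hgM⟩ := hM.exists_defining_function hxM
    have hO : IsOpen (U ∩ I) := hU.inter hIo
    have hgO : AnalyticOnNhd ℝ g (U ∩ I) := hg.mono inter_subset_left
    have hc : ∀ y ∈ U ∩ I, g y = 0 → _ := fun y hy hgy =>
      (hcontact y ((hgM y hy.1).2 hgy)).fderiv_eq_zero hU hg (fun z hz => (hgM z hz).1) hy.1
    have h1 := fun y hy hgy => (hc y hy hgy).1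
    have h2 := fun y hy hgy => (hc y hy hgy).2.1
    have h3 := fun y hy hgy => (hc y hy hgy).2.2
    have hgO' : ∀ y ∈ U ∩ I, fderiv ℝ g y ≠ 0 := fun y hy => hg' y hy.1
    have hgx := (hgM x hxU).1 hxM
    have hev := eventually_line_eq_zero_of_flat hO hgO hgO' (fun y hy hgy u u' hu hu' =>
      second_fderiv_eq_zero_of_span hO hgO hgO' hv2 h1 h2 h3 hy hgy
        (fun z hz => exists_eq_smul_add_smul_of_mem_ker (hgO' y hy) hy.2 (h1 y hy hgy)
          (acceleration_tangent_and_conjugate hO hgO hgO' hv1 h1 h2 h3 hy hgy).1 hz) hu hu')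
      ⟨hxU, hxI⟩ hgx (h1 x ⟨hxU, hxI⟩ hgx)
    have hline : Continuous fun t : ℝ => x + t • v x := by fun_prop
    have hnear : ∀ᶠ t in 𝓝 (0 : ℝ), x + t • v x ∈ U :=
      hline.continuousAt.preimage_mem_nhds (hU.mem_nhds (by simpa using hxU))
    exact hM.line_subset hMclosed (by
      filter_upwards [hev, hnear] with t ht htU using (hgM _ htU).2 ht)
  intro x hxM
  by_cases hcl : x ∈ closure (M ∩ I)
  · have hclosed : IsClosed {y | ∀ t : ℝ, y + t • v y ∈ M} := by
      simp only [ofPred_forall]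
      refine isClosed_iInter fun t => hMclosed.preimage ?_
      exact continuous_id.add (hv.continuous.const_smul t)
    exact closure_minimal (fun y hy => hindep y hy.1 hy.2) hclosed hcl
  · obtain ⟨U, g, hU, hxU, hg, hg', hgM⟩ := hM.exists_defining_function hxM
    have hO : IsOpen (U ∩ (closure (M ∩ I))ᶜ) := hU.inter isClosed_closure.isOpen_compl
    have hgx := (hgM x hxU).1 hxM
    have hev := eventually_line_eq_zero_of_geodesic hO (hg.mono inter_subset_left)
      (fun y hy => hg' y hy.1) (fun y _ => hv1.contDiffAt)
      (fun y hy hgy => ((hcontact y ((hgM y hy.1).2 hgy)).fderiv_eq_zero hU hg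
        (fun z hz => (hgM z hz).1) hy.1).1)
      (fun y hy hgy => by
        have hyM := (hgM y hy.1).2 hgy
        have hyI : ¬ LinearIndependent ℝ ![v y, w y] := fun h =>
          hy.2 (subset_closure ⟨hyM, h⟩)
        rw [LinearIndependent.pair_iff' (hv0 y hyM)] at hyI
        push Not at hyI
        obtain ⟨c, hc⟩ := hyI
        exact ⟨c, hc.symm⟩)
      ⟨hxU, hcl⟩ hgx
    have hline : Continuous fun t : ℝ => x + t • v x := by fun_prop
    have hnear : ∀ᶠ t in 𝓝 (0 : ℝ), x + t • v x ∈ U :=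
      hline.continuousAt.preimage_mem_nhds (hU.mem_nhds (by simpa using hxU))
    exact hM.line_subset hMclosed (by
      filter_upwards [hev, hnear] with t ht htU using (hgM _ htU).2 ht)
end
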